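/- arXiv:1503.01588 — 9 statements merged into one kernel-verified Lean document; each statement's English description precedes it below -/
import Mathlib

section
/- Fix n ≥ 1, a nonempty finite message space M, a one-round protocol Π : (Fin n → M) → Bool, t : ℕ, and ε ∈ ℝ with 0 < ε ≤ 1. Suppose that for every b : Bool, the probability over a uniformly random r : Fin n → M that r ∈ Robust^Π(b,t) is at least ε. Then for every natural number ℓ' with (ℓ' : ℝ) ≥ 8·n/ε², there exists a matrix Mat : Fin ℓ' → Fin n → M such that for every b : Bool, the probability over a uniformly random a : Fin n → Fin ℓ' that the vector (fun i => Mat (a i) i) lies in Robust^Π(b,t) is at least ε/2. -/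
/-!
The proof is the second moment method. Choose `Mat` uniformly at random and, for an outcome `b`,
let `X_b(Mat)` be the fraction of index vectors `a` whose read-off lies in the `b`-robust set, a set
of density `p_b ≥ ε`. Reading a random matrix at distinct positions gives independent uniform
entries (`expect_comp_injective`), so `𝔼 X_b = p_b`. Two index vectors that agree in no coordinate
read disjoint sets of entries, hence contribute exactly `p_b ^ 2` to `𝔼 X_b ^ 2`; the remaining pairs
have density at most `n / ℓ'`. Thus the variance of `X_b` is at most `n / ℓ' ≤ ε ^ 2 / 8`
(`variance_le`). If every matrix failed for some `b`, then `∑ b, (X_b - p_b) ^ 2 > ε ^ 2 / 4`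
pointwise, contradicting the fact that its expectation is at most `2 * (ε ^ 2 / 8)`.
-/

/-- The probability that a uniformly random element of a finite type satisfies `P`. -/
noncomputable def Pr {α : Type*} [Fintype α] (P : α → Prop) : ℝ :=
  letI := Classical.decPred P
  ((Finset.univ.filter P).card : ℝ) / Fintype.card α

/-- `RobustSet proto b t` is the set of message vectors `r` such that every vector within
Hamming distance `t` of `r` (including `r` itself) yields outcome `b`. -/
def RobustSet {ι M : Type*} [Fintype ι] [DecidableEq M]
    (proto : (ι → M) → Bool) (b : Bool) (t : ℕ) : Set (ι → M) :=
  {r | ∀ r', hammingDist r r' ≤ t → proto r' = b}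

/-- `proto` is `ε`-secure against `t` strong adaptive corruptions: for every adversary `A`
changing at most `t` coordinates of the honest messages, every outcome occurs with
probability at least `ε` over uniform honest messages. -/
def StrongSecure {ι M : Type*} [Fintype ι] [DecidableEq ι] [Fintype M] [DecidableEq M]
    (proto : (ι → M) → Bool) (t : ℕ) (ε : ℝ) : Prop :=
  ∀ A : (ι → M) → (ι → M), (∀ r, hammingDist r (A r) ≤ t) →
    ∀ b : Bool, ε ≤ Pr (fun r => proto (A r) = b)

open scoped BigOperators

lemma Pr_eq_expect {α : Type*} [Fintype α] (P : α → Prop) [DecidablePred P] :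
    Pr P = 𝔼 a, if P a then (1 : ℝ) else 0 := by
  rw [Fintype.expect_eq_sum_div_card, Finset.sum_boole, Pr]
  congr!

/-- Restricting a uniformly random function along an injection gives a uniformly random function. -/
lemma expect_comp_injective {ι κ M : Type*} [Fintype ι] [Fintype κ] [DecidableEq ι] [DecidableEq κ]
    [Fintype M] [Nonempty M] (g : ι → κ) (hg : Function.Injective g) (F : (ι → M) → ℝ) :
    𝔼 x : κ → M, F (x ∘ g) = 𝔼 y, F y := by
  classical
  let e : ι ⊕ ((Set.range g)ᶜ : Set κ) ≃ κ :=
    ((Equiv.ofInjective g hg).sumCongr (Equiv.refl _)).trans (Equiv.Set.sumCompl (Set.range g))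
  let E : (κ → M) ≃ (ι → M) × (((Set.range g)ᶜ : Set κ) → M) :=
    (e.symm.arrowCongr (Equiv.refl M)).trans (Equiv.sumArrowEquivProdArrow _ _ _)
  have hE : ∀ x, (E x).1 = x ∘ g := by
    intro x
    funext i
    simp [E, e, Equiv.sumArrowEquivProdArrow]
  calc 𝔼 x : κ → M, F (x ∘ g)
      = 𝔼 z : (ι → M) × (((Set.range g)ᶜ : Set κ) → M), F z.1 :=
        Fintype.expect_equiv E _ _ fun x => by rw [hE]
    _ = 𝔼 y, F y := by
        rw [← Finset.univ_product_univ, Finset.expect_product]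
        simp

/-- A uniformly random matrix, read at pairwise distinct positions `g`. -/
lemma expect_matrix {ι : Type*} [Fintype ι] [DecidableEq ι] {n l : ℕ} {M : Type*} [Fintype M]
    [Nonempty M] (g : ι → Fin l × Fin n) (hg : Function.Injective g) (F : (ι → M) → ℝ) :
    𝔼 A : Fin l → Fin n → M, F (fun i => A (g i).1 (g i).2) = 𝔼 y, F y := by
  rw [← expect_comp_injective g hg F]
  exact Fintype.expect_equiv (Equiv.curry _ _ _).symm _ _ fun A => rfl

section SecondMoment

variable {n l : ℕ} {M : Type*} [Fintype M] [Nonempty M]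

lemma expect_single (f : (Fin n → M) → ℝ) (a : Fin n → Fin l) :
    𝔼 A : Fin l → Fin n → M, f (fun i => A (a i) i) = 𝔼 r, f r :=
  expect_matrix (fun i => (a i, i)) (fun _ _ h => (Prod.ext_iff.1 h).2) f

/-- Index vectors agreeing nowhere read disjoint sets of entries, so the values are independent. -/
lemma expect_pair (f : (Fin n → M) → ℝ) (a a' : Fin n → Fin l) (h : ∀ i, a i ≠ a' i) :
    𝔼 A : Fin l → Fin n → M, f (fun i => A (a i) i) * f (fun i => A (a' i) i)
      = (𝔼 r, f r) ^ 2 := by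
  have hg : Function.Injective
      (Sum.elim (fun i => (a i, i)) (fun i => (a' i, i)) : Fin n ⊕ Fin n → Fin l × Fin n) := by
    rintro (i | i) (j | j) hij <;> simp only [Sum.elim_inl, Sum.elim_inr, Prod.mk.injEq] at hij
    · rw [hij.2]
    · obtain ⟨h1, rfl⟩ := hij
      exact absurd h1 (h i)
    · obtain ⟨h1, rfl⟩ := hij
      exact absurd h1.symm (h i)
    · rw [hij.2]
  have := expect_matrix _ hg
    (fun y : Fin n ⊕ Fin n → M => f (fun i => y (Sum.inl i)) * f (fun i => y (Sum.inr i)))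
  simp only [Sum.elim_inl, Sum.elim_inr] at this
  have hprod : 𝔼 y : Fin n ⊕ Fin n → M, f (fun i => y (Sum.inl i)) * f (fun i => y (Sum.inr i))
      = 𝔼 z : (Fin n → M) × (Fin n → M), f z.1 * f z.2 :=
    Fintype.expect_equiv (Equiv.sumArrowEquivProdArrow (Fin n) (Fin n) M) _ _ fun y => rfl
  rw [this, hprod, ← Finset.univ_product_univ, Finset.expect_product,
    sq, Finset.expect_mul_expect]

/-- The chance that a random index vector agrees with `a` at coordinate `i`. -/
lemma expect_agree (hl : 0 < l) (a : Fin n → Fin l) (i : Fin n) :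
    𝔼 a' : Fin n → Fin l, (if a i = a' i then (1 : ℝ) else 0) = 1 / l := by
  have : Nonempty (Fin l) := ⟨⟨0, hl⟩⟩
  have h1 := expect_comp_injective (M := Fin l) (fun _ : Unit => i)
    (fun _ _ _ => rfl) (fun y => if a i = y () then (1 : ℝ) else 0)
  simp only [Function.comp_apply] at h1
  have h2 : 𝔼 y : Unit → Fin l, (if a i = y () then (1 : ℝ) else 0)
      = 𝔼 c, if a i = c then (1 : ℝ) else 0 :=
    Fintype.expect_equiv (Equiv.funUnique Unit (Fin l)) _ _ fun y => rfl
  rw [h1, h2, Fintype.expect_eq_sum_div_card]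
  simp

/-- Over a random matrix, the mean of `f` over all read-offs has variance at most `n / l`. -/
lemma variance_le (hl : 0 < l) (f : (Fin n → M) → ℝ) (h0 : ∀ r, 0 ≤ f r) (h1 : ∀ r, f r ≤ 1) :
    𝔼 A : Fin l → Fin n → M, ((𝔼 a : Fin n → Fin l, f (fun i => A (a i) i)) - 𝔼 r, f r) ^ 2
      ≤ n / l := by
  have : Nonempty (Fin l) := ⟨⟨0, hl⟩⟩
  set p := 𝔼 r, f r with hp
  have hmean : 𝔼 A : Fin l → Fin n → M, 𝔼 a : Fin n → Fin l, f (fun i => A (a i) i) = p := by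
    rw [Finset.expect_comm]
    simp only [expect_single]
    simp [hp]
  have hpair : ∀ a a' : Fin n → Fin l,
      𝔼 A : Fin l → Fin n → M, f (fun i => A (a i) i) * f (fun i => A (a' i) i)
        ≤ p ^ 2 + ∑ i, if a i = a' i then (1 : ℝ) else 0 := by
    intro a a'
    by_cases h : ∀ i, a i ≠ a' i
    · rw [expect_pair f a a' h]
      exact le_add_of_nonneg_right (Finset.sum_nonneg fun i _ => by split_ifs <;> norm_num)
    · push Not at h
      obtain ⟨j, hj⟩ := h
      have hs : (1 : ℝ) ≤ ∑ i, if a i = a' i then (1 : ℝ) else 0 := by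
        have := Finset.single_le_sum (f := fun i => if a i = a' i then (1 : ℝ) else 0)
          (fun i _ => by split_ifs <;> norm_num) (Finset.mem_univ j)
        simpa [hj] using this
      have hE : 𝔼 A : Fin l → Fin n → M, f (fun i => A (a i) i) * f (fun i => A (a' i) i) ≤ 1 :=
        Finset.expect_le Finset.univ_nonempty fun A _ =>
          mul_le_one₀ (h1 _) (h0 _) (h1 _)
      nlinarith [sq_nonneg p]
  have hsecond : 𝔼 A : Fin l → Fin n → M, (𝔼 a : Fin n → Fin l, f (fun i => A (a i) i)) ^ 2
      ≤ p ^ 2 + n / l := by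
    calc 𝔼 A : Fin l → Fin n → M, (𝔼 a : Fin n → Fin l, f (fun i => A (a i) i)) ^ 2
        = 𝔼 a : Fin n → Fin l, 𝔼 a' : Fin n → Fin l, 𝔼 A : Fin l → Fin n → M,
            f (fun i => A (a i) i) * f (fun i => A (a' i) i) := by
          simp only [sq, Finset.expect_mul_expect]
          rw [Finset.expect_comm]
          exact Finset.expect_congr rfl fun a _ => Finset.expect_comm _ _ _
      _ ≤ 𝔼 a : Fin n → Fin l, 𝔼 a' : Fin n → Fin l,
            (p ^ 2 + ∑ i, if a i = a' i then (1 : ℝ) else 0) :=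
          Finset.expect_le_expect fun a _ => Finset.expect_le_expect fun a' _ => hpair a a'
      _ = p ^ 2 + n / l := by
          simp only [Finset.expect_add_distrib, Finset.expect_sum_comm, expect_agree hl]
          simp [div_eq_mul_inv]
  have hexp : 𝔼 A : Fin l → Fin n → M,
      ((𝔼 a : Fin n → Fin l, f (fun i => A (a i) i)) - p) ^ 2
      = 𝔼 A : Fin l → Fin n → M, (𝔼 a : Fin n → Fin l, f (fun i => A (a i) i)) ^ 2
        - 2 * p * p + p ^ 2 := by
    have hlin : 𝔼 A : Fin l → Fin n → M, 2 * p * 𝔼 a : Fin n → Fin l, f (fun i => A (a i) i)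
        = 2 * p * p := by rw [← Finset.mul_expect, hmean]
    simp only [← hlin, sub_sq, Finset.expect_add_distrib, Finset.expect_sub_distrib,
      Fintype.expect_const]
    congr 2
    exact Finset.expect_congr rfl fun A _ => by ring
  rw [hexp]
  linarith

end SecondMoment

/-- If both robust sets of `proto` have probability at least `ε`, then for
any `ℓ' ≥ 8n/ε²` there is a matrix `Mat` such that for each `b`, a uniformly random index
vector `a` reads off a `b`-robust message vector with probability at least `ε/2`. -/
theorem stmt3 {n : ℕ} (hn : 1 ≤ n) {M : Type*} [Fintype M] [Nonempty M] [DecidableEq M]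
    (proto : (Fin n → M) → Bool) (t : ℕ) {ε : ℝ} (hε0 : 0 < ε) (hε1 : ε ≤ 1)
    (h : ∀ b : Bool, ε ≤ Pr (fun r : Fin n → M => r ∈ RobustSet proto b t))
    (ℓ' : ℕ) (hl : (8 * n : ℝ) / ε ^ 2 ≤ ℓ') :
    ∃ Mat : Fin ℓ' → Fin n → M, ∀ b : Bool,
      ε / 2 ≤ Pr (fun a : Fin n → Fin ℓ' =>
        (fun i => Mat (a i) i) ∈ RobustSet proto b t) := by
  classical
  have hn' : (1 : ℝ) ≤ n := by exact_mod_cast hn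
  have hl0 : (0 : ℝ) < ℓ' := lt_of_lt_of_le (by positivity) hl
  have hlpos : 0 < ℓ' := by exact_mod_cast hl0
  have hbound : (n : ℝ) / ℓ' ≤ ε ^ 2 / 8 := by
    rw [div_le_iff₀ (by positivity)] at hl
    rw [div_le_div_iff₀ hl0 (by norm_num)]
    linarith
  let f : Bool → (Fin n → M) → ℝ := fun b r => if r ∈ RobustSet proto b t then 1 else 0
  let X : Bool → (Fin ℓ' → Fin n → M) → ℝ :=
    fun b A => 𝔼 a : Fin n → Fin ℓ', f b (fun i => A (a i) i)
  let D : Bool → (Fin ℓ' → Fin n → M) → ℝ := fun b A => (X b A - 𝔼 r, f b r) ^ 2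
  have hvar : ∀ b, 𝔼 A, D b A ≤ ε ^ 2 / 8 := fun b =>
    (variance_le hlpos (f b) (fun r => by dsimp only [f]; split_ifs <;> norm_num)
      (fun r => by dsimp only [f]; split_ifs <;> norm_num)).trans hbound
  have hp : ∀ b, ε ≤ 𝔼 r, f b r := fun b => by simpa only [Pr_eq_expect] using h b
  by_contra! hcon
  have hbig : ∀ A, ε ^ 2 / 4 < D true A + D false A := by
    intro A
    obtain ⟨b, hb⟩ := hcon A
    rw [Pr_eq_expect] at hb
    have hX : X b A < ε / 2 := hb
    have hD : ε ^ 2 / 4 < D b A := by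
      have := hp b
      dsimp only [D]
      nlinarith
    have hD0 : ∀ c, 0 ≤ D c A := fun c => sq_nonneg _
    cases b <;> linarith [hD0 true, hD0 false]
  have hlt : ε ^ 2 / 4 < 𝔼 A, (D true A + D false A) := by
    exact Finset.lt_expect (fun A _ => (hbig A).le)
      ⟨Classical.arbitrary _, Finset.mem_univ _, hbig _⟩
  rw [Finset.expect_add_distrib] at hlt
  linarith [hvar true, hvar false]
end

section
/- Let δ > 0 and ε ∈ ℝ with 0 < ε < 1. Let M : ℕ → Type be a family of nonempty finite message spaces, Π : ∀ n, (Fin n → M n) → Bool a family of one-round protocols, and t : ℕ → ℕ, and suppose that for every n ≥ 1, Π n is ε-secure against t n strong adaptive corruptions. Then there exist a constant ε' > 0, a constant C > 0, a function ℓ' : ℕ → ℕ with 1 ≤ ℓ' n and (ℓ' n : ℝ) ≤ 2^(C·(Real.log n)^(1+δ)) for all n ≥ 2, and a family of one-round protocols Π' : ∀ n, (Fin n → Fin (ℓ' n)) → Bool such that for every n ≥ 2, Π' n is ε'-secure against t n strong adaptive corruptions. (In particular each player in Π' n sends a message of length O((log n)^(1+δ)) bits.) -/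
/-- Security of a protocol is robustness of both outcomes: the adversary that moves `r` to a
nearby vector with outcome `≠ b`, whenever there is one, succeeds exactly off `RobustSet`. -/
lemma StrongSecure.le_pr_robustSet {ι M : Type*} [Fintype ι] [DecidableEq ι] [Fintype M]
    [DecidableEq M] {proto : (ι → M) → Bool} {t : ℕ} {ε : ℝ}
    (h : StrongSecure proto t ε) (b : Bool) :
    ε ≤ Pr (fun r => r ∈ RobustSet proto b t) := by
  classical
  have hA : ∀ r : ι → M, ∃ r', hammingDist r r' ≤ t ∧
      (proto r' = b → r ∈ RobustSet proto b t) := by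
    intro r
    by_cases hr : r ∈ RobustSet proto b t
    · exact ⟨r, by simp, fun _ => hr⟩
    · have hr2 := hr
      simp only [RobustSet, Set.mem_ofPred_eq, not_forall] at hr2
      obtain ⟨r', h1, h2⟩ := hr2
      exact ⟨r', h1, fun h3 => absurd h3 h2⟩
  choose A hA1 hA2 using hA
  refine (h A hA1 b).trans ?_
  unfold Pr
  gcongr with r
  exact hA2 r

/-- Replacing each message space by a list of `L` sampled messages `m i : L → M` preserves
robustness, since `r ↦ (m i (r i))ᵢ` does not increase Hamming distances. -/
lemma strongSecure_sample {ι L M : Type*} [Fintype ι] [DecidableEq ι] [Fintype M]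
    [DecidableEq M] [Fintype L] [DecidableEq L] {proto : (ι → M) → Bool} {t : ℕ} {ε : ℝ}
    (m : ι → L → M)
    (h : ∀ b, ε ≤ Pr (fun s : ι → L => (fun i => m i (s i)) ∈ RobustSet proto b t)) :
    StrongSecure (fun s : ι → L => proto (fun i => m i (s i))) t ε := by
  classical
  intro A hA b
  refine (h b).trans ?_
  unfold Pr
  gcongr with r
  intro hr
  exact hr _ ((hammingDist_comp_le_hammingDist m).trans (hA r))

/-- If `s` and `s'` disagree everywhere, then for uniform `m` the vectors `(m i (s i))ᵢ` and
`(m i (s' i))ᵢ` are uniform and independent. -/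
lemma card_sample_pair {ι L M : Type*} [Fintype ι] [DecidableEq ι] [Fintype M]
    [DecidableEq M] [Fintype L] [DecidableEq L] {s s' : ι → L} (hs : ∀ i, s i ≠ s' i)
    (S T : Finset (ι → M)) :
    (Finset.univ.filter fun m : ι → L → M =>
        (fun i => m i (s i)) ∈ S ∧ (fun i => m i (s' i)) ∈ T).card *
      (Fintype.card (ι → M) * Fintype.card (ι → M)) =
    S.card * T.card * Fintype.card (ι → L → M) := by
  -- `N` is the common size of the fibres of `m ↦ (m ∘ s, m ∘ s')`.
  set N : ℕ := ∏ i, ∏ j : L, if j = s i then 1 else if j = s' i then 1 else Fintype.card M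
    with hN
  have fib : ∀ a b : ι → M, (Finset.univ.filter fun m : ι → L → M =>
      ((fun i => m i (s i)), (fun i => m i (s' i))) = (a, b)).card = N := by
    intro a b
    have : (Finset.univ.filter fun m : ι → L → M =>
        ((fun i => m i (s i)), (fun i => m i (s' i))) = (a, b)) =
        Fintype.piFinset fun i => Fintype.piFinset fun j : L =>
          if j = s i then {a i} else if j = s' i then {b i} else Finset.univ := by
      ext m
      simp only [Finset.mem_filter, Finset.mem_univ, true_and, Prod.mk.injEq, funext_iff,
        Fintype.mem_piFinset]
      constructor
      · rintro ⟨h1, h2⟩ i j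
        split_ifs with h3 h4
        · simp [h3, h1]
        · simp [h4, h2]
        · simp
      · intro h
        refine ⟨fun i => ?_, fun i => ?_⟩
        · simpa using h i (s i)
        · simpa [(hs i).symm] using h i (s' i)
    rw [this, Fintype.card_piFinset, hN]
    refine Finset.prod_congr rfl fun i _ => ?_
    rw [Fintype.card_piFinset]
    refine Finset.prod_congr rfl fun j _ => ?_
    split_ifs <;> simp
  have key : ∀ S T : Finset (ι → M), (Finset.univ.filter fun m : ι → L → M =>
        (fun i => m i (s i)) ∈ S ∧ (fun i => m i (s' i)) ∈ T).card = S.card * T.card * N := by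
    intro S T
    rw [Finset.card_eq_sum_card_fiberwise (t := S ×ˢ T)
      (f := fun m : ι → L → M => ((fun i => m i (s i)), (fun i => m i (s' i))))]
    · rw [← Finset.card_product, ← smul_eq_mul, ← Finset.sum_const]
      refine Finset.sum_congr rfl fun p hp => ?_
      rw [← fib p.1 p.2, Finset.filter_filter]
      congr 1
      ext m
      simp only [Finset.mem_filter, Finset.mem_univ, true_and, and_iff_right_iff_imp]
      rintro rfl
      simpa using hp
    · intro m hm
      simpa using hm
  have htot := key Finset.univ Finset.univ
  simp only [Finset.mem_univ, and_self, Finset.filter_true, Finset.card_univ] at htot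
  rw [key, htot]
  ring

/-- The averaging step: some sample `m` hits both `S` and `T` often, because the mean of
the product of the two hit counts is at least the contribution of the pairs `(s, s')` that
disagree everywhere. -/
lemma exists_sample {n ℓ : ℕ} {M : Type*} [Fintype M] [DecidableEq M] [Nonempty M]
    (S T : Finset (Fin n → M)) :
    ∃ m : Fin n → Fin ℓ → M,
      (ℓ : ℝ) ^ n * ((ℓ - 1 : ℕ) : ℝ) ^ n *
        ((S.card / Fintype.card (Fin n → M)) * (T.card / Fintype.card (Fin n → M))) ≤
      ((Finset.univ.filter fun s : Fin n → Fin ℓ => (fun i => m i (s i)) ∈ S).card : ℝ) *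
      ((Finset.univ.filter fun s : Fin n → Fin ℓ => (fun i => m i (s i)) ∈ T).card : ℝ) := by
  set K : ℝ := ((Fintype.card (Fin n → M) : ℕ) : ℝ) with hK
  have hKpos : 0 < K := by rw [hK]; exact_mod_cast Fintype.card_pos
  set c : ℝ := (S.card / K) * (T.card / K) with hc
  have hc0 : 0 ≤ c := by positivity
  set V : ℝ := ((Fintype.card (Fin n → Fin ℓ → M) : ℕ) : ℝ) with hV
  have main : ∑ _m : Fin n → Fin ℓ → M, (ℓ : ℝ) ^ n * ((ℓ - 1 : ℕ) : ℝ) ^ n * c ≤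
      ∑ m : Fin n → Fin ℓ → M,
      ((Finset.univ.filter fun s : Fin n → Fin ℓ => (fun i => m i (s i)) ∈ S).card : ℝ) *
      ((Finset.univ.filter fun s : Fin n → Fin ℓ => (fun i => m i (s i)) ∈ T).card : ℝ) := by
    have e1 : ∀ m : Fin n → Fin ℓ → M,
      ((Finset.univ.filter fun s : Fin n → Fin ℓ => (fun i => m i (s i)) ∈ S).card : ℝ) *
      ((Finset.univ.filter fun s : Fin n → Fin ℓ => (fun i => m i (s i)) ∈ T).card : ℝ) =
      ∑ s : Fin n → Fin ℓ, ∑ s' : Fin n → Fin ℓ,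
        if (fun i => m i (s i)) ∈ S ∧ (fun i => m i (s' i)) ∈ T then (1 : ℝ) else 0 := by
      intro m
      rw [Finset.natCast_card_filter, Finset.natCast_card_filter, Finset.sum_mul_sum]
      simp only [ite_and, mul_ite, mul_one, mul_zero]
      refine Finset.sum_congr rfl fun s _ => Finset.sum_congr rfl fun s' _ => ?_
      split_ifs <;> rfl
    simp only [e1]
    rw [Finset.sum_comm]
    have e2 : ∀ s : Fin n → Fin ℓ, ((ℓ - 1 : ℕ) : ℝ) ^ n * (c * V) ≤
        ∑ m : Fin n → Fin ℓ → M, ∑ s' : Fin n → Fin ℓ,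
        if (fun i => m i (s i)) ∈ S ∧ (fun i => m i (s' i)) ∈ T then (1 : ℝ) else 0 := by
      intro s
      rw [Finset.sum_comm]
      have hcard : (Finset.univ.filter fun s' : Fin n → Fin ℓ => ∀ i, s i ≠ s' i).card
          = (ℓ - 1) ^ n := by
        have : (Finset.univ.filter fun s' : Fin n → Fin ℓ => ∀ i, s i ≠ s' i) =
            Fintype.piFinset fun i => Finset.univ.erase (s i) := by
          ext s'
          simp [eq_comm]
        rw [this, Fintype.card_piFinset]
        simp
      calc ((ℓ - 1 : ℕ) : ℝ) ^ n * (c * V)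
          = ∑ s' ∈ Finset.univ.filter fun s' : Fin n → Fin ℓ => ∀ i, s i ≠ s' i, c * V := by
            rw [Finset.sum_const, hcard, nsmul_eq_mul]
            push_cast
            rfl
        _ = ∑ s' ∈ Finset.univ.filter fun s' : Fin n → Fin ℓ => ∀ i, s i ≠ s' i,
            ∑ m : Fin n → Fin ℓ → M,
              if (fun i => m i (s i)) ∈ S ∧ (fun i => m i (s' i)) ∈ T then (1 : ℝ) else 0 := by
            refine Finset.sum_congr rfl fun s' hs' => ?_
            have h := card_sample_pair (by simpa using hs' : ∀ i, s i ≠ s' i) S T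
            rw [← Finset.natCast_card_filter]
            have h' := congrArg (Nat.cast : ℕ → ℝ) h
            rw [Nat.cast_mul, Nat.cast_mul, Nat.cast_mul, Nat.cast_mul, ← hK, ← hV] at h'
            rw [hc]
            field_simp
            linarith
        _ ≤ _ := by
            refine Finset.sum_le_sum_of_subset_of_nonneg (Finset.filter_subset _ _) ?_
            intros
            exact Finset.sum_nonneg fun m _ => by split_ifs <;> norm_num
    refine le_trans (le_of_eq ?_) (Finset.sum_le_sum fun s _ => e2 s)
    rw [Finset.sum_const, Finset.sum_const, nsmul_eq_mul, nsmul_eq_mul, Finset.card_univ,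
      Finset.card_univ, ← hV]
    simp only [Fintype.card_fun, Fintype.card_fin]
    push_cast
    ring
  obtain ⟨m, -, hm⟩ := Finset.exists_le_of_sum_le Finset.univ_nonempty main
  exact ⟨m, hm⟩

/-- With `2 * n` messages per player, security `ε` is kept up to a loss to `ε ^ 2 / 2`. -/
lemma exists_protocol {n : ℕ} (hn : 1 ≤ n) {M : Type*} [Fintype M] [DecidableEq M] [Nonempty M]
    {proto : (Fin n → M) → Bool} {t : ℕ} {ε : ℝ} (hε : 0 < ε) (h : StrongSecure proto t ε) :
    ∃ proto' : (Fin n → Fin (2 * n)) → Bool, StrongSecure proto' t (ε ^ 2 / 2) := by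
  classical
  obtain ⟨m, hm⟩ := exists_sample (ℓ := 2 * n)
    (Finset.univ.filter fun r => r ∈ RobustSet proto false t)
    (Finset.univ.filter fun r => r ∈ RobustSet proto true t)
  refine ⟨_, strongSecure_sample (proto := proto) m ?_⟩
  have h0 := h.le_pr_robustSet false
  have h1 := h.le_pr_robustSet true
  simp only [Finset.mem_filter, Finset.mem_univ, true_and] at hm
  set f : Bool → ℝ := fun b =>
    Pr (fun s : Fin n → Fin (2 * n) => (fun i => m i (s i)) ∈ RobustSet proto b t) with hf
  have hL : (0 : ℝ) < ((2 * n : ℕ) : ℝ) := by exact_mod_cast (by omega : 0 < 2 * n)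
  have hcard : ∀ b, ((Finset.univ.filter fun s : Fin n → Fin (2 * n) =>
      (fun i => m i (s i)) ∈ RobustSet proto b t).card : ℝ) = ((2 * n : ℕ) : ℝ) ^ n * f b := by
    intro b
    have : (0 : ℝ) < ((2 * n : ℕ) : ℝ) ^ n := by positivity
    simp only [hf, Pr, Fintype.card_fun, Fintype.card_fin, Nat.cast_pow]
    rw [mul_div_cancel₀ _ this.ne']
  have hle1 : ∀ b, f b ≤ 1 := by
    intro b
    refine div_le_one_of_le₀ ?_ (by positivity)
    exact_mod_cast Finset.card_le_univ _
  have hnonneg : ∀ b, 0 ≤ f b := fun b => by simp only [hf, Pr]; positivity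
  -- Bernoulli's inequality: a uniform pair `s, s'` disagrees everywhere with probability `≥ 1/2`.
  have hbern : (1 / 2 : ℝ) * ((2 * n : ℕ) : ℝ) ^ n ≤ ((2 * n - 1 : ℕ) : ℝ) ^ n := by
    have hn' : (1 : ℝ) ≤ n := by exact_mod_cast hn
    have hb := one_add_mul_le_pow (a := -(1 / (2 * n : ℝ))) (by
      have : 1 / (2 * n : ℝ) ≤ 1 := by
        rw [div_le_one (by positivity)]
        linarith
      linarith) n
    have e1 : (1 : ℝ) + n * -(1 / (2 * n : ℝ)) = 1 / 2 := by field_simp; norm_num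
    rw [e1] at hb
    calc (1 / 2 : ℝ) * ((2 * n : ℕ) : ℝ) ^ n
        ≤ (1 + -(1 / (2 * n : ℝ))) ^ n * ((2 * n : ℕ) : ℝ) ^ n := by gcongr
      _ = ((2 * n - 1 : ℕ) : ℝ) ^ n := by
        rw [← mul_pow, Nat.cast_sub (by omega)]
        push_cast
        congr 1
        field_simp
        ring
  have hprod : ε ^ 2 / 2 ≤ f false * f true := by
    rw [hcard, hcard] at hm
    have hP : (0 : ℝ) < ((2 * n : ℕ) : ℝ) ^ n := by positivity
    have hpp : ε ^ 2 ≤ Pr (fun r => r ∈ RobustSet proto false t) *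
        Pr (fun r => r ∈ RobustSet proto true t) := by
      rw [sq]
      gcongr
      exact hε.le.trans h0
    have hm2 : ((2 * n : ℕ) : ℝ) ^ n * ((1 / 2 : ℝ) * ((2 * n : ℕ) : ℝ) ^ n) * ε ^ 2 ≤
        ((2 * n : ℕ) : ℝ) ^ n * f false * (((2 * n : ℕ) : ℝ) ^ n * f true) := by
      refine le_trans ?_ hm
      gcongr
      refine hpp.trans (le_of_eq ?_)
      unfold Pr
      congr!
    have hPP : 0 < ((2 * n : ℕ) : ℝ) ^ n * ((2 * n : ℕ) : ℝ) ^ n := by positivity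
    refine le_of_mul_le_mul_left ?_ hPP
    linarith
  intro b
  refine hprod.trans ?_
  cases b
  · exact mul_le_of_le_one_right (hnonneg _) (hle1 _)
  · exact mul_le_of_le_one_left (hnonneg _) (hle1 _)

/-- `2 n ≤ n ^ 2 = 2 ^ (2 log n / log 2)`, and `log n ≤ (log n) ^ (1 + δ) / (log 2) ^ δ`. -/
lemma two_mul_le_two_rpow {δ : ℝ} (hδ : 0 < δ) {n : ℕ} (hn : 2 ≤ n) :
    ((2 * n : ℕ) : ℝ) ≤
      (2 : ℝ) ^ ((2 / (Real.log 2 * Real.log 2 ^ δ)) * Real.log n ^ (1 + δ)) := by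
  have hn' : (2 : ℝ) ≤ n := by exact_mod_cast hn
  have hl2 : 0 < Real.log 2 := Real.log_pos (by norm_num)
  have hln : Real.log 2 ≤ Real.log n := Real.log_le_log (by norm_num) hn'
  have hlnpos : 0 < Real.log n := hl2.trans_le hln
  have hpow : Real.log 2 ^ δ ≤ Real.log n ^ δ := Real.rpow_le_rpow hl2.le hln hδ.le
  have h2δ : 0 < Real.log 2 ^ δ := Real.rpow_pos_of_pos hl2 δ
  calc ((2 * n : ℕ) : ℝ) ≤ (n : ℝ) ^ 2 := by push_cast; nlinarith
    _ = (2 : ℝ) ^ (2 / Real.log 2 * Real.log n) := by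
      rw [Real.rpow_def_of_pos (by norm_num), ← Real.exp_log (by positivity : (0 : ℝ) < n ^ 2),
        Real.log_pow]
      congr 1
      field_simp
      norm_num
    _ ≤ _ := by
      apply Real.rpow_le_rpow_of_exponent_le (by norm_num)
      rw [Real.rpow_add hlnpos, Real.rpow_one, div_mul_eq_mul_div, div_mul_eq_mul_div,
        div_le_div_iff₀ hl2 (by positivity)]
      have := mul_le_mul_of_nonneg_left hpow (by positivity : 0 ≤ 2 * Real.log n * Real.log 2)
      linarith

/-- Any family of one-round protocols that is `ε`-secure against `t n`
strong adaptive corruptions can be converted into a family of one-round protocols with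
message alphabet of size `2^(O((log n)^(1+δ)))` (i.e. messages of `O((log n)^(1+δ))` bits)
which is `ε'`-secure against `t n` strong adaptive corruptions for some constant `ε' > 0`. -/
theorem stmt4 (δ : ℝ) (hδ : 0 < δ) {ε : ℝ} (hε0 : 0 < ε) (hε1 : ε < 1)
    (M : ℕ → Type) [∀ n, Fintype (M n)] [∀ n, Nonempty (M n)] [∀ n, DecidableEq (M n)]
    (proto : ∀ n, (Fin n → M n) → Bool) (t : ℕ → ℕ)
    (hsec : ∀ n, 1 ≤ n → StrongSecure (proto n) (t n) ε) :
    ∃ ε' : ℝ, 0 < ε' ∧ ∃ C : ℝ, 0 < C ∧ ∃ ℓ' : ℕ → ℕ,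
      (∀ n, 2 ≤ n → 1 ≤ ℓ' n ∧ (ℓ' n : ℝ) ≤ (2 : ℝ) ^ (C * Real.log n ^ (1 + δ))) ∧
      ∃ proto' : ∀ n, (Fin n → Fin (ℓ' n)) → Bool,
        ∀ n, 2 ≤ n → StrongSecure (proto' n) (t n) ε' := by
  have hl2 : 0 < Real.log 2 := Real.log_pos (by norm_num)
  have hp : ∀ n, ∃ p : (Fin n → Fin (2 * n)) → Bool,
      2 ≤ n → StrongSecure p (t n) (ε ^ 2 / 2) := by
    intro n
    by_cases hn : 2 ≤ n
    · obtain ⟨p, hp⟩ := exists_protocol (by omega) hε0 (hsec n (by omega))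
      exact ⟨p, fun _ => hp⟩
    · exact ⟨fun _ => true, fun h => absurd h hn⟩
  choose p hp using hp
  exact ⟨ε ^ 2 / 2, by positivity, 2 / (Real.log 2 * Real.log 2 ^ δ), by positivity,
    fun n => 2 * n, fun n hn => ⟨by dsimp only; omega, two_mul_le_two_rpow hδ hn⟩, p, hp⟩
end

section
/- Fix n ≥ 1, ℓ ≥ 1, t : ℕ, and a one-round protocol Π : (Fin n → (Fin ℓ → Bool)) → Bool whose message space is Fin ℓ → Bool (ℓ-bit messages). Define the single-bit protocol Π' : ((Fin n × Fin ℓ) → Bool) → Bool on n·ℓ players by Π' x = Π (fun i j => x (i, j)). Then for each b : Bool, the probability over a uniformly random x : (Fin n × Fin ℓ) → Bool that x ∈ Robust^{Π'}(b,t) (with Hamming distance counting positions in Fin n × Fin ℓ) is at least the probability over a uniformly random r : Fin n → (Fin ℓ → Bool) that r ∈ Robust^{Π}(b,t) (with Hamming distance counting coordinates in Fin n). -/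
/-- Every message that differs contains a bit that differs, so `(i, j) ↦ i` maps the differing
positions of `x` and `y` onto the differing messages. -/
theorem hammingDist_curry_le {ι κ M : Type*} [Fintype ι] [Fintype κ] [DecidableEq M]
    (x y : ι × κ → M) :
    hammingDist (Function.curry x) (Function.curry y) ≤ hammingDist x y := by
  classical
  unfold hammingDist
  refine le_trans (Finset.card_le_card (t := (Finset.univ.filter
    fun p => x p ≠ y p).image Prod.fst) ?_) Finset.card_image_le
  intro i hi
  obtain ⟨j, hj⟩ := Function.ne_iff.mp (Finset.mem_filter.mp hi).2
  exact Finset.mem_image.mpr ⟨(i, j), by simpa using hj, rfl⟩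

/-- Splitting each `ℓ`-bit message into `ℓ` single-bit messages can only
increase the probability of the robust sets (with the same corruption budget `t`). -/
theorem stmt5 {n ℓ : ℕ} (hn : 1 ≤ n) (hℓ : 1 ≤ ℓ) (t : ℕ)
    (proto : (Fin n → (Fin ℓ → Bool)) → Bool) (b : Bool) :
    Pr (fun r : Fin n → (Fin ℓ → Bool) => r ∈ RobustSet proto b t)
      ≤ Pr (fun x : Fin n × Fin ℓ → Bool =>
          x ∈ RobustSet (fun x' : Fin n × Fin ℓ → Bool =>
            proto (fun i j => x' (i, j))) b t) := by
  classical
  have hcard : Fintype.card (Fin n → Fin ℓ → Bool) = Fintype.card (Fin n × Fin ℓ → Bool) :=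
    Fintype.card_congr (Equiv.curry _ _ _).symm
  unfold Pr
  rw [hcard]
  gcongr
  refine Finset.card_le_card_of_injOn Function.uncurry ?_
    (Equiv.curry (Fin n) (Fin ℓ) Bool).symm.injective.injOn
  intro r hr
  simp only [Finset.coe_filter, Finset.mem_univ, true_and, Set.mem_ofPred_eq] at hr ⊢
  intro x hx
  refine hr (Function.curry x) (le_trans ?_ hx)
  exact hammingDist_curry_le (Function.uncurry r) x
end

section
/- There is a universal constant C > 0 such that the following holds: for every n ≥ 1, every protocol Π : (Fin n → Bool) → Bool in which each player sends a single uniformly random bit, every ε ∈ ℝ with 0 < ε < 1, and every t : ℕ, if Π is ε-secure against t strong adaptive corruptions, then (t : ℝ) ≤ C · Real.sqrt (n · (1 + Real.log (1/ε))). -/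
/-- The numerical content of the induction step: `a₀, a₁` stand for the sums of `exp (l f)` over
the two facets of the cube, `b₀, b₁` for those of `exp (-l f)`, and `E = exp l`. The cross terms
`a₀ b₁`, `a₁ b₀` have product at most `P²` and ratio between `E⁻²` and `E²`. -/
lemma facet_step {a₀ a₁ b₀ b₁ P E : ℝ} (ha₀ : 0 < a₀) (ha₁ : 0 < a₁) (hb₀ : 0 < b₀)
    (hb₁ : 0 < b₁) (h₀ : a₀ * b₀ ≤ P) (h₁ : a₁ * b₁ ≤ P) (hE : 1 ≤ E)
    (ha : a₀ ≤ E * a₁) (ha' : a₁ ≤ E * a₀) (hb : b₀ ≤ E * b₁) (hb' : b₁ ≤ E * b₀) :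
    (a₀ + a₁) * (b₀ + b₁) ≤ P * (2 * (E + E⁻¹)) := by
  have hE0 : 0 < E := by linarith
  have hP : 0 < P := lt_of_lt_of_le (mul_pos ha₀ hb₀) h₀
  have hs : 0 < a₀ * b₁ := mul_pos ha₀ hb₁
  have hs' : 0 < a₁ * b₀ := mul_pos ha₁ hb₀
  have hr : a₀ * b₁ ≤ E ^ 2 * (a₁ * b₀) := by
    calc a₀ * b₁ ≤ (E * a₁) * (E * b₀) := by gcongr
      _ = _ := by ring
  have hr' : a₁ * b₀ ≤ E ^ 2 * (a₀ * b₁) := by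
    calc a₁ * b₀ ≤ (E * a₀) * (E * b₁) := by gcongr
      _ = _ := by ring
  have hprod : (a₀ * b₁) * (a₁ * b₀) ≤ P ^ 2 := by
    calc (a₀ * b₁) * (a₁ * b₀) = (a₀ * b₀) * (a₁ * b₁) := by ring
      _ ≤ P * P := by gcongr
      _ = _ := by ring
  have hc : 2 ≤ E + E⁻¹ := by
    have h : E + E⁻¹ - 2 = (E - 1) ^ 2 * E⁻¹ := by field_simp; ring
    have : 0 ≤ (E - 1) ^ 2 * E⁻¹ := by positivity
    linarith
  have hexp : (a₀ + a₁) * (b₀ + b₁) = a₀ * b₀ + a₁ * b₁ + (a₀ * b₁ + a₁ * b₀) := by ring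
  rw [hexp]
  generalize a₀ * b₁ = s at *
  generalize a₁ * b₀ = s' at *
  have hcross : s + s' ≤ P * (E + E⁻¹) := by
    refine abs_le_of_sq_le_sq' ?_ (by positivity) |>.2
    have h1 : (s + s') ^ 2 ≤ (s * s') * (E + E⁻¹) ^ 2 := by
      have h := mul_nonneg (sub_nonneg.2 hr) (sub_nonneg.2 hr')
      have h2 : (s * s') * (E + E⁻¹) ^ 2 - (s + s') ^ 2
          = (E ^ 2 * s' - s) * (E ^ 2 * s - s') * (E⁻¹) ^ 2 := by
        field_simp; ring
      have : 0 ≤ (E ^ 2 * s' - s) * (E ^ 2 * s - s') * (E⁻¹) ^ 2 := by positivity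
      linarith
    calc (s + s') ^ 2 ≤ (s * s') * (E + E⁻¹) ^ 2 := h1
      _ ≤ P ^ 2 * (E + E⁻¹) ^ 2 := by gcongr
      _ = _ := by ring
  nlinarith

lemma sum_cube_succ {n : ℕ} (g : (Fin (n + 1) → Bool) → ℝ) :
    ∑ x, g x = ∑ y : Fin n → Bool, g (Fin.cons false y)
      + ∑ y : Fin n → Bool, g (Fin.cons true y) := by
  rw [← (Fin.consEquiv (fun _ : Fin (n + 1) => Bool)).sum_comp, Fintype.sum_prod_type]
  simp [Fin.consEquiv, add_comm]

lemma hammingDist_cons {n : ℕ} (a b : Bool) (x y : Fin n → Bool) :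
    hammingDist (Fin.cons a x : Fin (n + 1) → Bool) (Fin.cons b y)
      = (if a ≠ b then 1 else 0) + hammingDist x y := by
  simp only [hammingDist, Fin.card_filter_univ_succ, Fin.cons_zero, Fin.cons_succ]
  split_ifs <;> omega

/-- A function on the cube that is 1-Lipschitz for the Hamming distance has sub-Gaussian
fluctuations; sums replace expectations, so `cosh l` becomes `4 * cosh l`. -/
lemma sum_exp_mul_sum_exp_le {l : ℝ} (hl : 0 ≤ l) : ∀ (n : ℕ) (f : (Fin n → Bool) → ℝ),
    (∀ x y, f x ≤ f y + hammingDist x y) →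
      (∑ x, Real.exp (l * f x)) * (∑ x, Real.exp (-(l * f x))) ≤ (4 * Real.cosh l) ^ n
  | 0, f, _ => by simp [← Real.exp_add]
  | n + 1, f, hf => by
    have hE : 1 ≤ Real.exp l := Real.one_le_exp hl
    have hslice : ∀ a : Bool, ∀ x y : Fin n → Bool,
        f (Fin.cons a x) ≤ f (Fin.cons a y) + hammingDist x y := by
      intro a x y
      have h := hf (Fin.cons a x) (Fin.cons a y)
      simpa [hammingDist_cons] using h
    have hflip : ∀ a b : Bool, ∀ x : Fin n → Bool,
        f (Fin.cons a x) ≤ f (Fin.cons b x) + 1 := by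
      intro a b x
      have h := hf (Fin.cons a x) (Fin.cons b x)
      rw [hammingDist_cons] at h
      cases a <;> cases b <;> simp at h ⊢ <;> linarith
    have hup : ∀ a b : Bool, ∑ x : Fin n → Bool, Real.exp (l * f (Fin.cons a x))
        ≤ Real.exp l * ∑ x : Fin n → Bool, Real.exp (l * f (Fin.cons b x)) := by
      intro a b
      rw [Finset.mul_sum]
      refine Finset.sum_le_sum fun x _ => ?_
      rw [← Real.exp_add, Real.exp_le_exp]
      nlinarith [hflip a b x]
    have hdown : ∀ a b : Bool, ∑ x : Fin n → Bool, Real.exp (-(l * f (Fin.cons a x)))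
        ≤ Real.exp l * ∑ x : Fin n → Bool, Real.exp (-(l * f (Fin.cons b x))) := by
      intro a b
      rw [Finset.mul_sum]
      refine Finset.sum_le_sum fun x _ => ?_
      rw [← Real.exp_add, Real.exp_le_exp]
      nlinarith [hflip b a x]
    have hpos : ∀ g : (Fin n → Bool) → ℝ, 0 < ∑ x, Real.exp (g x) := fun g =>
      Finset.sum_pos (fun x _ => Real.exp_pos _) Finset.univ_nonempty
    have ih := fun a => sum_exp_mul_sum_exp_le hl n (fun x => f (Fin.cons a x)) (hslice a)
    rw [sum_cube_succ, sum_cube_succ]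
    refine (facet_step (hpos _) (hpos _) (hpos _) (hpos _) (ih false) (ih true) hE
      (hup _ _) (hup _ _) (hdown _ _) (hdown _ _)).trans (le_of_eq ?_)
    rw [pow_succ, Real.cosh_eq, Real.exp_neg]
    ring

/-- (Single-bit bound, one-round, strong adaptive.) There is a universal
constant `C > 0` such that any single-bit one-round protocol that is `ε`-secure against `t`
strong adaptive corruptions satisfies `t ≤ C·√(n·(1 + log(1/ε)))`. -/
theorem stmt7 : ∃ C : ℝ, 0 < C ∧ ∀ n : ℕ, 1 ≤ n →
    ∀ proto : (Fin n → Bool) → Bool, ∀ ε : ℝ, 0 < ε → ε < 1 → ∀ t : ℕ,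
      StrongSecure proto t ε →
        (t : ℝ) ≤ C * Real.sqrt (n * (1 + Real.log (1 / ε))) := by
  refine ⟨Real.sqrt 2, by positivity, ?_⟩
  intro n hn proto ε hε hε1 t hsec
  classical
  have hn0 : (0 : ℝ) < n := by exact_mod_cast hn
  obtain ⟨b, hb⟩ : ∃ b : Bool, 2 ^ n ≤ 2 * (Finset.univ.filter (fun r => proto r = b)).card := by
    have h := Finset.card_filter_add_card_filter_not (s := (Finset.univ : Finset (Fin n → Bool)))
      (fun r => proto r = true)
    simp only [Bool.not_eq_true, Finset.card_univ, Fintype.card_fun, Fintype.card_bool,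
      Fintype.card_fin] at h
    by_contra! hcon
    have h1 := hcon true
    have h2 := hcon false
    omega
  set S : Finset (Fin n → Bool) := Finset.univ.filter (fun r => proto r = b) with hS
  have hSne : S.Nonempty := by
    rw [← Finset.card_pos]
    have : 0 < 2 ^ n := by positivity
    omega
  -- a nearest-point map onto `S`
  have hnear : ∀ r, ∃ s ∈ S, ∀ s' ∈ S, hammingDist r s ≤ hammingDist r s' := fun r =>
    S.exists_min_image (fun s => hammingDist r s) hSne
  choose p hpS hpmin using hnear
  set f : (Fin n → Bool) → ℝ := fun r => hammingDist r (p r) with hf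
  have hlip : ∀ x y, f x ≤ f y + hammingDist x y := by
    intro x y
    have h1 := hpmin x (p y) (hpS y)
    have h2 := hammingDist_triangle x y (p y)
    simp only [hf]
    exact_mod_cast (by omega : hammingDist x (p x) ≤ hammingDist y (p y) + hammingDist x y)
  have hfS : ∀ x ∈ S, f x = 0 := by
    intro x hx
    have h1 := hpmin x x hx
    rw [hammingDist_self] at h1
    simp only [hf]
    exact_mod_cast Nat.le_zero.1 h1
  have hfar : ε * 2 ^ n ≤ (Finset.univ.filter (fun r => (t : ℝ) ≤ f r)).card := by
    have h := hsec (fun r => if hammingDist r (p r) ≤ t then p r else r) (by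
      intro r
      split_ifs with h
      · exact h
      · simp) (!b)
    unfold Pr at h
    rw [le_div_iff₀ (by simp)] at h
    simp only [Fintype.card_fun, Fintype.card_bool, Fintype.card_fin, Nat.cast_pow,
      Nat.cast_ofNat] at h
    refine h.trans ?_
    norm_cast
    refine Finset.card_le_card fun r hr => ?_
    simp only [Finset.mem_filter, Finset.mem_univ, true_and] at hr ⊢
    by_contra hlt
    have hlt' : hammingDist r (p r) ≤ t := by
      simp only [hf, not_le, Nat.cast_lt] at hlt
      exact hlt.le
    rw [if_pos hlt'] at hr
    have := (Finset.mem_filter.1 (hpS r)).2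
    rw [this] at hr
    cases b <;> simp at hr
  set l : ℝ := t / n with hl
  have hl0 : 0 ≤ l := by positivity
  have hup : ε * 2 ^ n * Real.exp (l * t) ≤ ∑ x, Real.exp (l * f x) := by
    calc ε * 2 ^ n * Real.exp (l * t)
        ≤ (Finset.univ.filter (fun r => (t : ℝ) ≤ f r)).card * Real.exp (l * t) := by gcongr
      _ = ∑ x ∈ Finset.univ.filter (fun r => (t : ℝ) ≤ f r), Real.exp (l * t) := by simp
      _ ≤ ∑ x ∈ Finset.univ.filter (fun r => (t : ℝ) ≤ f r), Real.exp (l * f x) := by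
          refine Finset.sum_le_sum fun x hx => ?_
          have := (Finset.mem_filter.1 hx).2
          gcongr
      _ ≤ _ := Finset.sum_le_sum_of_subset_of_nonneg (Finset.filter_subset _ _)
          fun _ _ _ => (Real.exp_pos _).le
  have hdown : (2 : ℝ) ^ n / 2 ≤ ∑ x, Real.exp (-(l * f x)) := by
    calc (2 : ℝ) ^ n / 2 ≤ S.card := by
          have : (2 : ℝ) ^ n ≤ 2 * S.card := by exact_mod_cast hb
          linarith
      _ = ∑ x ∈ S, Real.exp (-(l * f x)) := by
          rw [Finset.sum_congr rfl (fun x hx => by rw [hfS x hx])]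
          simp
      _ ≤ _ := Finset.sum_le_sum_of_subset_of_nonneg (Finset.subset_univ _)
          fun _ _ _ => (Real.exp_pos _).le
  have hmain : ε / 2 * Real.exp (l * t) ≤ Real.exp (l ^ 2 / 2) ^ n := by
    have h4 : (0 : ℝ) < 4 ^ n := by positivity
    refine le_of_mul_le_mul_left ?_ h4
    calc (4 : ℝ) ^ n * (ε / 2 * Real.exp (l * t))
        = (ε * 2 ^ n * Real.exp (l * t)) * (2 ^ n / 2) := by
          rw [show (4 : ℝ) = 2 * 2 by norm_num, mul_pow]; ring
      _ ≤ (∑ x, Real.exp (l * f x)) * (∑ x, Real.exp (-(l * f x))) := by gcongr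
      _ ≤ (4 * Real.cosh l) ^ n := sum_exp_mul_sum_exp_le hl0 n f hlip
      _ = 4 ^ n * Real.cosh l ^ n := mul_pow _ _ _
      _ ≤ 4 ^ n * Real.exp (l ^ 2 / 2) ^ n := by
          gcongr
          exact Real.cosh_le_exp_half_sq l
  have hlog := Real.log_le_log (by positivity) hmain
  rw [Real.log_mul (by positivity) (by positivity), Real.log_div hε.ne' two_ne_zero, Real.log_exp,
    Real.log_pow, Real.log_exp] at hlog
  have hlog2 : Real.log 2 ≤ 1 := by linarith [Real.log_two_lt_d9]
  rw [← Real.sqrt_mul (by norm_num)]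
  apply Real.le_sqrt_of_sq_le
  rw [one_div, Real.log_inv]
  have hkey : (t : ℝ) ^ 2 / n ≤ 2 * (1 + -Real.log ε) := by
    have e1 : l * t = (t : ℝ) ^ 2 / n := by rw [hl]; ring
    have e2 : (n : ℝ) * (l ^ 2 / 2) = (t : ℝ) ^ 2 / n / 2 := by rw [hl]; field_simp
    rw [e1, e2] at hlog
    linarith
  rw [div_le_iff₀ hn0] at hkey
  linarith
end

section
/- Fix n ≥ 1, s ≥ 1, a nonempty finite message space M, ε ∈ ℝ with 0 < ε < 1, and a symmetric one-round protocol Π : (Fin (n + 2·s) → M) → Bool. Suppose Π is ε-secure against 2·s static rushing corruptions. Then there exists a symmetric one-round protocol Π' : (Fin n → M) → Bool that is ε-secure against s strong adaptive corruptions. -/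
/-- A one-round protocol is symmetric if its outcome is invariant under any permutation of
the players' messages. -/
def SymmetricProto {ι M : Type*} (proto : (ι → M) → Bool) : Prop :=
  ∀ (π : Equiv.Perm ι) (r : ι → M), proto (r ∘ π) = proto r

/-- `proto` is `ε`-secure against `t` static rushing corruptions: for every set `S` of at
most `t` players and every adversary `A` that only alters the messages of players in `S`,
and whose alterations depend only on the messages of players outside `S`, every outcome
occurs with probability at least `ε` over uniform honest messages. -/
def RushingSecure {ι M : Type*} [Fintype ι] [DecidableEq ι] [Fintype M]
    (proto : (ι → M) → Bool) (t : ℕ) (ε : ℝ) : Prop :=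
  ∀ S : Finset ι, S.card ≤ t →
    ∀ A : (ι → M) → (ι → M),
      (∀ r, ∀ i ∉ S, A r i = r i) →
      (∀ r r', (∀ i ∉ S, r i = r' i) → A r = A r') →
      ∀ b : Bool, ε ≤ Pr (fun r => proto (A r) = b)

/-- `x` is locked to `b` if the outcome of `proto` is `b` whatever the last `m` messages are. -/
def Locked {n m : ℕ} {M : Type*} (proto : (Fin (n + m) → M) → Bool) (b : Bool)
    (x : Fin n → M) : Prop :=
  ∀ y : Fin m → M, proto (Fin.append x y) = b

lemma Pr_mono {α : Type*} [Fintype α] {P Q : α → Prop} (h : ∀ a, P a → Q a) :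
    Pr P ≤ Pr Q := by
  classical
  unfold Pr
  gcongr
  exact h _

/-- Messages that an event does not look at can be dropped from the probability space. -/
lemma Pr_append {n m : ℕ} {M : Type*} [Fintype M] [Nonempty M] (P : (Fin n → M) → Prop) :
    Pr (fun r : Fin (n + m) → M => P (fun i => r (Fin.castAdd m i))) = Pr P := by
  classical
  unfold Pr
  have hcard : (Finset.univ.filter
      (fun r : Fin (n + m) → M => P (fun i => r (Fin.castAdd m i)))).card
      = (Finset.univ.filter P).card * Fintype.card (Fin m → M) := by
    rw [← Finset.card_univ, ← Finset.card_product]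
    refine Finset.card_equiv (Fin.appendEquiv n m).symm ?_
    intro r
    simp [Fin.appendEquiv]
  have h2 : Fintype.card (Fin (n + m) → M)
      = Fintype.card (Fin n → M) * Fintype.card (Fin m → M) := by
    rw [← Fintype.card_prod]
    exact Fintype.card_congr (Fin.appendEquiv n m).symm
  have h3 : (Fintype.card (Fin m → M) : ℝ) ≠ 0 := by
    exact_mod_cast Fintype.card_ne_zero
  convert mul_div_mul_right _ _ h3 using 2
  · norm_cast
  · exact_mod_cast h2

lemma le_Pr_locked {n m : ℕ} {M : Type*} [Fintype M] [Nonempty M] {ε : ℝ}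
    {proto : (Fin (n + m) → M) → Bool} (hsec : RushingSecure proto m ε) (b : Bool) :
    ε ≤ Pr (Locked proto b) := by
  classical
  -- The best response of the last `m` players: avoid the outcome `b` whenever possible.
  have hbest : ∀ x : Fin n → M, ∃ y : Fin m → M,
      proto (Fin.append x y) = b → Locked proto b x := by
    intro x
    by_cases h : Locked proto b x
    · exact ⟨fun _ => Classical.arbitrary M, fun _ => h⟩
    · obtain ⟨y, hy⟩ := not_forall.mp h
      exact ⟨y, fun h' => absurd h' hy⟩
  choose best hbest using hbest
  have key := hsec (Finset.univ.map (Fin.natAddEmb n)) (by simp)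
    (fun r => Fin.append (fun i => r (Fin.castAdd m i))
      (best (fun i => r (Fin.castAdd m i)))) ?_ ?_ b
  · rw [← Pr_append (m := m)]
    exact key.trans (Pr_mono fun r hr => hbest _ hr)
  · intro r i hi
    induction i using Fin.addCases with
    | left i => simp
    | right j => exact absurd (by simp) hi
  · intro r r' h
    have : (fun i => r (Fin.castAdd m i)) = fun i => r' (Fin.castAdd m i) := by
      funext i
      refine h _ ?_
      simp only [Finset.mem_map, Finset.mem_univ, true_and, not_exists]
      intro j hj
      have := congrArg Fin.val hj
      simp at this
      omega
    simp only [this]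

lemma Locked.comp_perm {n m : ℕ} {M : Type*} {proto : (Fin (n + m) → M) → Bool}
    (hsym : SymmetricProto proto) {b : Bool} {x : Fin n → M} (h : Locked proto b x)
    (π : Equiv.Perm (Fin n)) : Locked proto b (x ∘ π) := by
  intro y
  rw [← h y, ← hsym (finSumFinEquiv.permCongr (Equiv.sumCongr π (Equiv.refl _)))
    (Fin.append x y)]
  congr 1
  funext i
  induction i using Fin.addCases <;> simp [Equiv.permCongr_apply]

lemma locked_far {n m : ℕ} {M : Type*} [Nonempty M] [DecidableEq M]
    {proto : (Fin (n + m) → M) → Bool} (hsym : SymmetricProto proto) {b b' : Bool}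
    {x x' : Fin n → M} (h : Locked proto b x) (h' : Locked proto b' x')
    (hd : hammingDist x x' ≤ m) : b = b' := by
  classical
  obtain ⟨e⟩ : Nonempty ({i // x i ≠ x' i} ↪ Fin m) := by
    apply Function.Embedding.nonempty_of_card_le
    simpa [Fintype.card_subtype, hammingDist] using hd
  -- The swap of each differing seat `i` with the extra seat `e i` assigned to it.
  let f : Fin n ⊕ Fin m → Fin n ⊕ Fin m := Sum.elim
    (fun i => if hi : x i ≠ x' i then Sum.inr (e ⟨i, hi⟩) else Sum.inl i)
    (fun j => if hj : ∃ d, e d = j then Sum.inl hj.choose.1 else Sum.inr j)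
  have finl : ∀ d, f (Sum.inl d.1) = Sum.inr (e d) := fun d => by simp [f, d.2]
  have finl' : ∀ i, x i = x' i → f (Sum.inl i) = Sum.inl i := fun i hi => by simp [f, hi]
  have finr : ∀ d, f (Sum.inr (e d)) = Sum.inl d.1 := fun d => by
    have hj : ∃ d', e d' = e d := ⟨d, rfl⟩
    have : hj.choose = d := e.injective hj.choose_spec
    simp only [f, Sum.elim_inr, dif_pos hj, this]
  have finr' : ∀ j, (¬ ∃ d, e d = j) → f (Sum.inr j) = Sum.inr j := fun j hj => by
    simp only [f, Sum.elim_inr, dif_neg hj]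
  have hf : Function.Involutive f := by
    rintro (i | j)
    · by_cases hi : x i = x' i
      · rw [finl' i hi, finl' i hi]
      · rw [finl ⟨i, hi⟩, finr]
    · by_cases hj : ∃ d, e d = j
      · obtain ⟨d, rfl⟩ := hj
        rw [finr, finl]
      · rw [finr' j hj, finr' j hj]
  -- The differing entries of `z`, placed on the extra seats, with a fixed padding elsewhere.
  let pad : (Fin n → M) → Fin m → M := fun z j =>
    if hj : ∃ d, e d = j then z hj.choose.1 else Classical.arbitrary M
  have pad_e : ∀ z d, pad z (e d) = z d.1 := fun z d => by
    have hj : ∃ d', e d' = e d := ⟨d, rfl⟩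
    have : hj.choose = d := e.injective hj.choose_spec
    simp only [pad, dif_pos hj, this]
  have pad_ne : ∀ z j, (¬ ∃ d, e d = j) → pad z j = Classical.arbitrary M := fun z j hj => by
    simp only [pad, dif_neg hj]
  rw [← h (pad x'), ← h' (pad x), ← hsym (finSumFinEquiv.permCongr hf.toPerm)]
  congr 1
  funext k
  obtain ⟨k, rfl⟩ := finSumFinEquiv.surjective k
  simp only [Function.comp_apply, Equiv.permCongr_apply, Equiv.symm_apply_apply,
    Function.Involutive.coe_toPerm]
  rcases k with i | j
  · by_cases hi : x i = x' i
    · simp [finl' i hi, hi]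
    · rw [finl ⟨i, hi⟩]
      simp [pad_e]
  · by_cases hj : ∃ d, e d = j
    · obtain ⟨d, rfl⟩ := hj
      rw [finr]
      simp [pad_e]
    · rw [finr' j hj]
      simp [pad_ne _ j hj]

/-- From any symmetric one-round protocol on `n + 2s` players that is
`ε`-secure against `2s` static rushing corruptions, one obtains a symmetric one-round
protocol on `n` players that is `ε`-secure against `s` strong adaptive corruptions. -/
theorem stmt10 {n s : ℕ} (hn : 1 ≤ n) (hs : 1 ≤ s) {M : Type*}
    [Fintype M] [Nonempty M] [DecidableEq M]
    {ε : ℝ} (hε0 : 0 < ε) (hε1 : ε < 1)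
    (proto : (Fin (n + 2 * s) → M) → Bool)
    (hsym : SymmetricProto proto)
    (hsec : RushingSecure proto (2 * s) ε) :
    ∃ proto' : (Fin n → M) → Bool,
      SymmetricProto proto' ∧ StrongSecure proto' s ε := by
  classical
  have hperm : ∀ (π : Equiv.Perm (Fin n)) (r : Fin n → M),
      (∃ x, Locked proto true x ∧ hammingDist r x ≤ s) →
      ∃ x, Locked proto true x ∧ hammingDist (r ∘ π) x ≤ s := by
    rintro π r ⟨x, hx, hd⟩
    refine ⟨x ∘ π, hx.comp_perm hsym π, le_trans (le_of_eq ?_) hd⟩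
    exact Finset.card_equiv π (by simp)
  refine ⟨fun r => decide (∃ x, Locked proto true x ∧ hammingDist r x ≤ s), ?_, ?_⟩
  · intro π r
    rw [decide_eq_decide]
    refine ⟨fun h => ?_, hperm π r⟩
    have := hperm π⁻¹ _ h
    rwa [show (r ∘ π) ∘ (π⁻¹ : Equiv.Perm (Fin n)) = r by funext i; simp] at this
  · intro A hA b
    refine (le_Pr_locked hsec b).trans (Pr_mono fun r hr => ?_)
    cases b with
    | true => exact decide_eq_true ⟨r, hr, by rw [hammingDist_comm]; exact hA r⟩
    | false =>
      refine decide_eq_false ?_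
      rintro ⟨x, hx, hd⟩
      have hlt : hammingDist r x ≤ 2 * s := by
        have := hammingDist_triangle r (A r) x
        have := hA r
        omega
      exact absurd (locked_far hsym hr hx hlt) (by simp)
end

section
/- Fix n ≥ 1, s ≥ 1, a nonempty finite message space M, and a symmetric one-round protocol Π : (Fin (n + 2·s) → M) → Bool (identifying Fin (n + 2·s) with Fin n ⊕ Fin s ⊕ Fin s via concatenation). Define Π' : (Fin n → M) → Bool by Π' r = true if and only if for every r' : Fin s → M there exists r'' : Fin s → M with Π (r ++ r' ++ r'') = true. Suppose r : Fin n → M satisfies Π (r ++ q) = true for every q : Fin (2·s) → M. Then for every r̂ : Fin n → M with dist(r, r̂) ≤ s, it holds that Π' r̂ = true; that is, r ∈ Robust^{Π'}(true, s). -/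
/-- Concatenation of a vector on `Fin n` with two vectors on `Fin s`, viewed as a vector on
`Fin (n + 2 * s)`. -/
def app3 {n s : ℕ} {M : Type*} (r : Fin n → M) (r' r'' : Fin s → M) :
    Fin (n + 2 * s) → M :=
  fun i => Fin.append r (Fin.append r' r'') (Fin.cast (by omega) i)

/-- If the entries of `r` occur in `w` at distinct positions `g i`, a symmetric protocol cannot
distinguish `w` from some vector starting with `r`. -/
lemma SymmetricProto.exists_append_eq {n m : ℕ} {M : Type*} {proto : (Fin (n + m) → M) → Bool}
    (hsym : SymmetricProto proto) {r : Fin n → M} {w : Fin (n + m) → M}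
    (g : Fin n → Fin (n + m)) (hg : Function.Injective g) (hw : ∀ i, w (g i) = r i) :
    ∃ q : Fin m → M, proto (Fin.append r q) = proto w := by
  classical
  let e := (Equiv.ofInjective _ (Fin.castAdd_injective n m)).symm.trans (Equiv.ofInjective g hg)
  let π : Equiv.Perm (Fin (n + m)) :=
    Equiv.extendSubtype (p := (· ∈ Set.range (Fin.castAdd m))) (q := (· ∈ Set.range g)) e
  have hπ (i : Fin n) : π (Fin.castAdd m i) = g i := by
    have h := Equiv.extendSubtype_apply_of_mem
      (p := (· ∈ Set.range (Fin.castAdd m))) (q := (· ∈ Set.range g)) e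
      (Fin.castAdd m i) (Set.mem_range_self i)
    refine h.trans ?_
    have h2 : (Equiv.ofInjective _ (Fin.castAdd_injective n m)).symm
        ⟨Fin.castAdd m i, Set.mem_range_self i⟩ = i :=
      Equiv.ofInjective_symm_apply (Fin.castAdd_injective n m) i
    simp only [e, Equiv.trans_apply, h2, Equiv.ofInjective_apply]
  refine ⟨fun j => w (π (Fin.natAdd n j)), ?_⟩
  rw [← hsym π w]
  congr 1
  funext i
  refine Fin.addCases (fun i => ?_) (fun j => ?_) i
  · simp [hπ, hw]
  · simp

lemma app3_castAdd {n s : ℕ} {M : Type*} (r : Fin n → M) (r' r'' : Fin s → M) (i : Fin n) :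
    app3 r r' r'' (Fin.castAdd (2 * s) i) = r i :=
  Fin.append_left r (Fin.append r' r'') i

/-- The position of the `j`-th player of the last block is `n + (s + j)`. -/
lemma app3_last {n s : ℕ} {M : Type*} (r : Fin n → M) (r' r'' : Fin s → M) (j : Fin s) :
    app3 r r' r'' ⟨n + (s + j), by omega⟩ = r'' j :=
  (Fin.append_right r (Fin.append r' r'') (Fin.natAdd s j)).trans (Fin.append_right r' r'' j)

/-- If the honest messages `r` fix the outcome of the symmetric protocol
`proto` to `true` no matter what the last `2s` players send, then `r` belongs to the
`(true, s)`-robust set of the min-max protocol `proto'`. -/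
theorem stmt11 {n s : ℕ} (hn : 1 ≤ n) (hs : 1 ≤ s) {M : Type*}
    [Fintype M] [Nonempty M] [DecidableEq M]
    (proto : (Fin (n + 2 * s) → M) → Bool) (hsym : SymmetricProto proto)
    (proto' : (Fin n → M) → Bool)
    (hdef : ∀ r : Fin n → M, proto' r = true ↔
      ∀ r' : Fin s → M, ∃ r'' : Fin s → M, proto (app3 r r' r'') = true)
    (r : Fin n → M)
    (hfix : ∀ q : Fin (2 * s) → M, proto (Fin.append r q) = true) :
    r ∈ RobustSet proto' true s := by
  intro rh hd
  rw [hdef]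
  intro r'
  let D := {i : Fin n // r i ≠ rh i}
  have hcard : Fintype.card D ≤ Fintype.card (Fin s) := by
    rw [Fintype.card_subtype, Fintype.card_fin]
    exact hd
  obtain ⟨f⟩ := Function.Embedding.nonempty_of_card_le hcard
  let r'' : Fin s → M := Function.extend f (fun d => r d.1) (fun _ => Classical.arbitrary M)
  -- An entry of `r` is found in place where `rh` agrees with `r`, and in the last block otherwise.
  let g : Fin n → Fin (n + 2 * s) := fun i =>
    if h : r i ≠ rh i then ⟨n + (s + f ⟨i, h⟩), by omega⟩ else Fin.castAdd (2 * s) i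
  have hg : Function.Injective g := by
    intro i j hij
    by_cases hi : r i ≠ rh i <;> by_cases hj : r j ≠ rh j <;>
      simp only [g, hi, hj, dite_true, dite_false, not_false_eq_true, ne_eq,
        Fin.ext_iff, Fin.val_castAdd] at hij
    · have h : f ⟨i, hi⟩ = f ⟨j, hj⟩ := Fin.ext (by omega)
      exact congrArg Subtype.val (f.injective h)
    · omega
    · omega
    · exact Fin.ext hij
  have hw (i : Fin n) : app3 rh r' r'' (g i) = r i := by
    by_cases h : r i ≠ rh i
    · simp only [g, dif_pos h, app3_last]
      exact f.injective.extend_apply _ _ ⟨i, h⟩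
    · simp only [g, dif_neg h, app3_castAdd]
      exact (not_not.mp h).symm
  obtain ⟨q, hq⟩ := hsym.exists_append_eq g hg hw
  exact ⟨r'', hq ▸ hfix q⟩
end

section
/- Let ε ∈ ℝ with 0 < ε < 1, let M : ℕ → Type be a family of nonempty finite message spaces, let Π : ∀ n, (Fin n → M n) → Bool be a family of symmetric one-round protocols, and let t : ℕ → ℕ be nondecreasing. If for every n ≥ 1 the protocol Π n is ε-secure against t n static rushing corruptions, then there exist constants C > 0 and c ≥ 1 such that for all n ≥ 2, (t n : ℝ) ≤ C · Real.sqrt n · (Real.log n)^c. (Any symmetric one-round coin-flipping protocol can be secure against at most Õ(√n) adaptive corruptions, since adaptive security implies static rushing security.) -/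
/-! ### Concentration of measure on product spaces -/

/-- Variance bound for functions with bounded differences, with the normalisations cleared: the
variance of `f` under the uniform measure is at most `n`. -/
lemma variance_le_s13 {M : Type*} [Fintype M] [Nonempty M] (n : ℕ) :
    ∀ f : (Fin n → M) → ℝ,
      (∀ x i a, |f (Function.update x i a) - f x| ≤ 1) →
      (Fintype.card M : ℝ) ^ n * ∑ x, f x ^ 2 - (∑ x, f x) ^ 2
        ≤ n * ((Fintype.card M : ℝ) ^ n) ^ 2 := by
  induction n with
  | zero => intro f _; simp
  | succ n ih =>
    intro f hf
    set q : ℝ := (Fintype.card M : ℝ) with hq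
    have hq0 : 0 < q := by rw [hq]; exact_mod_cast Fintype.card_pos
    have hsum : ∀ F : (Fin (n + 1) → M) → ℝ,
        ∑ x, F x = ∑ x : Fin n → M, ∑ a : M, F (Fin.cons a x) := by
      intro F
      rw [← (Fin.consEquiv (fun _ => M)).sum_comp, Fintype.sum_prod_type_right]
      rfl
    have hfc : ∀ (x : Fin n → M) (a b : M), |f (Fin.cons a x) - f (Fin.cons b x)| ≤ 1 := by
      intro x a b
      have := hf (Fin.cons b x) 0 a
      rwa [Fin.update_cons_zero] at this
    -- The variance of `f` in the first coordinate alone is at most `1`.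
    have hone : ∀ x : Fin n → M,
        q * ∑ a, f (Fin.cons a x) ^ 2 - (∑ a, f (Fin.cons a x)) ^ 2 ≤ q ^ 2 := by
      intro x
      have h1 : ∑ a : M, ∑ b : M, (f (Fin.cons a x) - f (Fin.cons b x)) ^ 2 ≤ q ^ 2 := by
        calc _ ≤ ∑ a : M, ∑ b : M, (1 : ℝ) := by
              refine Finset.sum_le_sum fun a _ => Finset.sum_le_sum fun b _ => ?_
              exact (sq_le_one_iff_abs_le_one _).2 (hfc x a b)
          _ = q ^ 2 := by simp [hq, sq]
      have h2 : ∑ a : M, ∑ b : M, (f (Fin.cons a x) - f (Fin.cons b x)) ^ 2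
          = 2 * (q * ∑ a, f (Fin.cons a x) ^ 2 - (∑ a, f (Fin.cons a x)) ^ 2) := by
        simp only [sub_sq, Finset.sum_add_distrib, Finset.sum_sub_distrib, Finset.sum_const,
          Finset.card_univ, nsmul_eq_mul, ← Finset.mul_sum, ← Finset.sum_mul]
        ring
      nlinarith [sq_nonneg q]
    -- Averaging over the first coordinate preserves the bounded difference property.
    have ih' := ih (fun x => (∑ a, f (Fin.cons a x)) / q) (by
      intro x i b
      rw [← sub_div, ← Finset.sum_sub_distrib, abs_div, abs_of_pos hq0, div_le_one hq0]
      calc _ ≤ ∑ a : M, |f (Fin.cons a (Function.update x i b)) - f (Fin.cons a x)| :=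
            Finset.abs_sum_le_sum_abs _ _
        _ ≤ ∑ a : M, (1 : ℝ) := by
            refine Finset.sum_le_sum fun a _ => ?_
            rw [Fin.cons_update]
            exact hf _ _ _
        _ = q := by simp [hq])
    simp only [div_pow, ← Finset.sum_div] at ih'
    rw [← mul_div_assoc, ← sub_div, div_le_iff₀ (by positivity)] at ih'
    have h3 := Finset.sum_le_sum fun x (_ : x ∈ (Finset.univ : Finset (Fin n → M))) => hone x
    rw [Finset.sum_sub_distrib, ← Finset.mul_sum] at h3
    simp only [Finset.sum_const, Finset.card_univ, nsmul_eq_mul, Fintype.card_fun,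
      Fintype.card_fin, Nat.cast_pow] at h3
    rw [hsum, hsum]
    have h4 := mul_le_mul_of_nonneg_left h3 (pow_nonneg hq0.le n)
    rw [← hq] at h4
    push_cast
    rw [pow_succ]
    generalize q ^ n = Q at *
    linarith

/-- Two sets of density at least `ε` contain points at Hamming distance at most `2 √(n / ε)`. -/
lemma exists_close {M : Type*} [Fintype M] [Nonempty M] [DecidableEq M] {n : ℕ} {ε : ℝ}
    (hε : 0 < ε) (A B : Finset (Fin n → M))
    (hA : ε * (Fintype.card M : ℝ) ^ n ≤ A.card) (hB : ε * (Fintype.card M : ℝ) ^ n ≤ B.card) :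
    ∃ x ∈ A, ∃ y ∈ B, (hammingDist x y : ℝ) ≤ 2 * Real.sqrt (n / ε) := by
  set N : ℝ := (Fintype.card M : ℝ) ^ n with hN
  have hN0 : 0 < N := by
    have : (0 : ℝ) < Fintype.card M := by exact_mod_cast Fintype.card_pos
    positivity
  have hAne : A.Nonempty := by
    rw [← Finset.card_pos]
    exact_mod_cast (mul_pos hε hN0).trans_le hA
  by_contra! hfar
  set s : ℝ := Real.sqrt (n / ε) with hs
  have hs0 : 0 ≤ s := Real.sqrt_nonneg _
  have hs2 : ε * s ^ 2 = n := by
    rw [hs, Real.sq_sqrt (by positivity)]; field_simp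
  -- The Hamming distance to `A`.
  let d : (Fin n → M) → ℕ := fun y => A.inf' hAne fun x => hammingDist x y
  have hd_att : ∀ y, ∃ x ∈ A, d y = hammingDist x y := fun y =>
    Finset.exists_mem_eq_inf' hAne _
  have hd_le : ∀ y, ∀ x ∈ A, d y ≤ hammingDist x y := fun y x hx =>
    Finset.inf'_le _ hx
  have hd_lip : ∀ y z, d y ≤ d z + hammingDist z y := by
    intro y z
    obtain ⟨x, hx, hxz⟩ := hd_att z
    rw [hxz]
    exact (hd_le y x hx).trans (hammingDist_triangle _ _ _)
  have hupd : ∀ (x : Fin n → M) i a, hammingDist x (Function.update x i a) ≤ 1 := by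
    intro x i a
    unfold hammingDist
    rw [← Finset.card_singleton i]
    refine Finset.card_le_card fun j hj => ?_
    by_contra hji
    simp only [Finset.mem_singleton] at hji
    simp [Function.update_of_ne hji] at hj
  have hvar := variance_le_s13 n (fun x => (d x : ℝ)) (by
    intro x i a
    have h1 := hd_lip x (Function.update x i a)
    have h2 := hd_lip (Function.update x i a) x
    have h3 := hupd x i a
    rw [hammingDist_comm] at h1
    rw [abs_le]
    constructor
    · have : d x ≤ d (Function.update x i a) + 1 := by omega
      have : (d x : ℝ) ≤ d (Function.update x i a) + 1 := by exact_mod_cast this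
      linarith
    · have : d (Function.update x i a) ≤ d x + 1 := by omega
      have : (d (Function.update x i a) : ℝ) ≤ d x + 1 := by exact_mod_cast this
      linarith)
  rw [← hN] at hvar
  obtain ⟨μ, hμ⟩ : ∃ μ : ℝ, ∑ x, (d x : ℝ) = N * μ :=
    ⟨(∑ x, (d x : ℝ)) / N, by field_simp⟩
  have hcard : (Fintype.card (Fin n → M) : ℝ) = N := by simp [hN]
  have hdev : ∑ x, ((d x : ℝ) - μ) ^ 2 ≤ n * N := by
    have : ∑ x, ((d x : ℝ) - μ) ^ 2 = ∑ x, (d x : ℝ) ^ 2 - N * μ ^ 2 := by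
      simp only [sub_sq, Finset.sum_add_distrib, Finset.sum_sub_distrib, Finset.sum_const,
        Finset.card_univ, nsmul_eq_mul, ← Finset.mul_sum, ← Finset.sum_mul, hμ, hcard]
      ring
    rw [this]
    rw [hμ] at hvar
    refine le_of_mul_le_mul_left ?_ hN0
    nlinarith
  -- Chebyshev's inequality for a set of density at least `ε`.
  have hcheb : ∀ (T : Finset (Fin n → M)) (v : ℝ), ε * N ≤ T.card →
      (∀ x ∈ T, v ≤ ((d x : ℝ) - μ) ^ 2) → 0 ≤ v → v ≤ s ^ 2 := by
    intro T v hT hv hv0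
    have h1 : (T.card : ℝ) * v ≤ ∑ x ∈ T, ((d x : ℝ) - μ) ^ 2 := by
      rw [← nsmul_eq_mul]
      exact Finset.card_nsmul_le_sum _ _ _ hv
    have h2 : ∑ x ∈ T, ((d x : ℝ) - μ) ^ 2 ≤ ∑ x, ((d x : ℝ) - μ) ^ 2 :=
      Finset.sum_le_sum_of_subset_of_nonneg (Finset.subset_univ _) fun _ _ _ => sq_nonneg _
    have h3 : ε * N * v ≤ T.card * v := mul_le_mul_of_nonneg_right hT hv0
    refine le_of_mul_le_mul_left (a := ε * N) ?_ (mul_pos hε hN0)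
    calc ε * N * v ≤ n * N := by linarith
      _ = ε * N * s ^ 2 := by rw [← hs2]; ring
  have hμs : μ ≤ s := by
    have := hcheb A (μ ^ 2) hA (fun x hx => by
      have : d x = 0 := by simpa using hd_le x x hx
      simp [this]) (sq_nonneg _)
    exact le_of_sq_le_sq this hs0
  have hBd : ∀ y ∈ B, 2 * s < d y := by
    intro y hy
    obtain ⟨x, hx, hxy⟩ := hd_att y
    rw [hxy]
    exact hfar x hx y hy
  have hBne : B.Nonempty := by
    rw [← Finset.card_pos]
    exact_mod_cast (mul_pos hε hN0).trans_le hB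
  -- The closest point of `B` to `A` has deviation strictly larger than `s`.
  obtain ⟨y, hy, hymin⟩ := B.exists_min_image d hBne
  have hyB := hBd y hy
  have := hcheb B (((d y : ℝ) - μ) ^ 2) hB (fun x hx => by
    have : (d y : ℝ) ≤ d x := by exact_mod_cast hymin x hx
    exact pow_le_pow_left₀ (by linarith) (by linarith) 2) (sq_nonneg _)
  have := le_of_sq_le_sq this hs0
  linarith

/-! ### Vectors that force the outcome -/

/-- `Forced proto S b r`: whatever the players in `S` send, given the messages of `r` outside `S`,
the outcome is `b`. -/
def Forced {ι M : Type*} (proto : (ι → M) → Bool) (S : Finset ι) (b : Bool) (r : ι → M) : Prop :=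
  ∀ s : ι → M, (∀ i ∉ S, s i = r i) → proto s = b

/-- Security against the adversary that avoids the outcome `b` whenever possible bounds the
density of the vectors forcing `b` from below. -/
lemma forced_density {ι M : Type*} [Fintype ι] [DecidableEq ι] [Fintype M] [Nonempty M]
    {proto : (ι → M) → Bool} {t : ℕ} {ε : ℝ} (h : RushingSecure proto t ε)
    (S : Finset ι) (hS : S.card ≤ t) (b : Bool) : ε ≤ Pr (Forced proto S b) := by
  classical
  obtain ⟨m⟩ := ‹Nonempty M›
  -- Overwriting `S` by a constant makes the adversary depend only on the honest messages.
  let base : (ι → M) → (ι → M) := fun r i => if i ∈ S then m else r i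
  let A : (ι → M) → (ι → M) := fun r =>
    if H : ∃ s : ι → M, (∀ i ∉ S, s i = base r i) ∧ proto s ≠ b then H.choose else base r
  have hbase : ∀ r, ∀ i ∉ S, base r i = r i := fun r i hi => by simp [base, hi]
  have hA1 : ∀ r, ∀ i ∉ S, A r i = r i := by
    intro r i hi
    by_cases H : ∃ s : ι → M, (∀ i ∉ S, s i = base r i) ∧ proto s ≠ b
    · simp only [A, dif_pos H]
      rw [H.choose_spec.1 i hi, hbase r i hi]
    · simp only [A, dif_neg H]
      exact hbase r i hi
  have hA2 : ∀ r r', (∀ i ∉ S, r i = r' i) → A r = A r' := by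
    intro r r' hr
    have : base r = base r' := by
      funext i
      by_cases hi : i ∈ S
      · simp [base, hi]
      · simp [base, hi, hr i hi]
    simp only [A, this]
  refine (h S hS A hA1 hA2 b).trans ?_
  unfold Pr
  refine div_le_div_of_nonneg_right ?_ (Nat.cast_nonneg _)
  refine Nat.cast_le.2 (Finset.card_le_card fun r hr => ?_)
  simp only [Finset.mem_filter, Finset.mem_univ, true_and] at hr ⊢
  intro s hs
  by_contra hsb
  have H : ∃ s : ι → M, (∀ i ∉ S, s i = base r i) ∧ proto s ≠ b :=
    ⟨s, fun i hi => by rw [hs i hi, hbase r i hi], hsb⟩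
  simp only [A, dif_pos H] at hr
  exact H.choose_spec.2 hr

/-- For a symmetric protocol, vectors forcing different outcomes differ in more than `|S|` places
outside `S`. -/
lemma forced_far {ι M : Type*} [Fintype ι] [DecidableEq ι] [DecidableEq M]
    {proto : (ι → M) → Bool} (hsym : SymmetricProto proto) (S : Finset ι) {r r' : ι → M}
    (hr : Forced proto S false r) (hr' : Forced proto S true r') :
    S.card < (Finset.univ.filter fun i => i ∉ S ∧ r i ≠ r' i).card := by
  by_contra! hle
  set D := Finset.univ.filter fun i => i ∉ S ∧ r i ≠ r' i with hD
  obtain ⟨T, hTS, hTD⟩ := Finset.exists_subset_card_eq hle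
  have hDS : ∀ i ∈ D, i ∉ S := fun i hi => (Finset.mem_filter.1 hi).2.1
  have hDT : ∀ i ∈ D, i ∉ T := fun i hi hiT => hDS i hi (hTS hiT)
  let e : D ≃ T := Finset.equivOfCardEq hTD.symm
  -- The involution exchanging `D` with `T ⊆ S`.
  let g : ι → ι := fun i =>
    if h : i ∈ D then (e ⟨i, h⟩ : ι) else if h : i ∈ T then (e.symm ⟨i, h⟩ : ι) else i
  have hgD : ∀ i (h : i ∈ D), g i = e ⟨i, h⟩ := fun i h => by simp [g, h]
  have hgT : ∀ i (h : i ∈ T), g i = e.symm ⟨i, h⟩ := fun i h => by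
    have : i ∉ D := fun h' => hDT i h' h
    simp [g, h, this]
  have hgn : ∀ i, i ∉ D → i ∉ T → g i = i := fun i h h' => by simp [g, h, h']
  have hgDT : ∀ i ∈ D, g i ∈ T := fun i h => by rw [hgD i h]; exact (e ⟨i, h⟩).2
  have hgTD : ∀ i ∈ T, g i ∈ D := fun i h => by rw [hgT i h]; exact (e.symm ⟨i, h⟩).2
  have hinv : Function.Involutive g := by
    intro i
    by_cases h : i ∈ D
    · rw [hgT _ (hgDT i h)]
      simp [hgD i h]
    · by_cases h' : i ∈ T
      · rw [hgD _ (hgTD i h')]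
        simp [hgT i h']
      · rw [hgn i h h', hgn i h h']
  let s : ι → M := fun i => if i ∈ T then r' (g i) else r i
  have hs : proto s = false := hr s fun i hi => by
    have : i ∉ T := fun h => hi (hTS h)
    simp [s, this]
  have hs' : proto (s ∘ hinv.toPerm g) = true := hr' _ fun i hi => by
    have hiT : i ∉ T := fun h => hi (hTS h)
    simp only [Function.comp_apply, Function.Involutive.coe_toPerm, s]
    by_cases h : i ∈ D
    · rw [if_pos (hgDT i h), hinv i]
    · rw [hgn i h hiT, if_neg hiT]
      by_contra hne
      exact h (by simp [hD, hi, hne])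
  rw [hsym, hs] at hs'
  exact absurd hs' (by decide)

/-! ### The bound on the number of corruptions -/

/-- The bound `t ≤ 2 √(n / ε)` for a single symmetric protocol. -/
lemma corruption_bound {M : Type*} [Fintype M] [Nonempty M] [DecidableEq M] {n t : ℕ} {ε : ℝ}
    (hε : 0 < ε) {proto : (Fin n → M) → Bool} (hsym : SymmetricProto proto)
    (h : RushingSecure proto t ε) : (t : ℝ) ≤ 2 * Real.sqrt (n / ε) := by
  classical
  by_contra! hlt
  obtain ⟨S, -, hS⟩ := Finset.exists_subset_card_eq
    (s := (Finset.univ : Finset (Fin n))) (n := min t n) (by simp)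
  have hcard : ∀ b, ε * (Fintype.card M : ℝ) ^ n ≤
      (Finset.univ.filter (Forced proto S b)).card := by
    intro b
    have h1 := forced_density h S (by omega) b
    have hN : (0 : ℝ) < Fintype.card (Fin n → M) := by exact_mod_cast Fintype.card_pos
    unfold Pr at h1
    rw [le_div_iff₀ hN] at h1
    simp only [Fintype.card_fun, Fintype.card_fin, Nat.cast_pow] at h1
    convert h1
  obtain ⟨x, hx, y, hy, hxy⟩ := exists_close hε _ _ (hcard false) (hcard true)
  have hfar := forced_far hsym S (Finset.mem_filter.1 hx).2 (Finset.mem_filter.1 hy).2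
  have hxt : hammingDist x y < t := by exact_mod_cast hxy.trans_lt hlt
  have h1 : (Finset.univ.filter fun i => i ∉ S ∧ x i ≠ y i).card ≤ hammingDist x y :=
    Finset.card_le_card fun i hi => by
      simp only [Finset.mem_filter, Finset.mem_univ, true_and] at hi ⊢
      exact hi.2
  have h2 : (Finset.univ.filter fun i => i ∉ S ∧ x i ≠ y i).card ≤ n := by
    simpa using Finset.card_le_univ (Finset.univ.filter fun i => i ∉ S ∧ x i ≠ y i)
  omega

/-- Any family of symmetric one-round protocols that is `ε`-secure against
`t n` static rushing corruptions (with `t` nondecreasing) satisfies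
`t n ≤ C·√n·(log n)^c` for some constants `C > 0`, `c ≥ 1`. -/
theorem stmt13 {ε : ℝ} (hε0 : 0 < ε) (hε1 : ε < 1)
    (M : ℕ → Type) [∀ n, Fintype (M n)] [∀ n, Nonempty (M n)] [∀ n, DecidableEq (M n)]
    (proto : ∀ n, (Fin n → M n) → Bool) (t : ℕ → ℕ) (hmono : Monotone t)
    (hsym : ∀ n, SymmetricProto (proto n))
    (h : ∀ n, 1 ≤ n → RushingSecure (proto n) (t n) ε) :
    ∃ C c : ℝ, 0 < C ∧ 1 ≤ c ∧ ∀ n : ℕ, 2 ≤ n →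
      (t n : ℝ) ≤ C * Real.sqrt n * Real.log n ^ c := by
  have hlog2 : 0 < Real.log 2 := Real.log_pos (by norm_num)
  refine ⟨2 / Real.sqrt ε / Real.log 2, 1, by positivity, le_rfl, fun n hn => ?_⟩
  have hb := corruption_bound hε0 (hsym n) (h n (by omega))
  rw [Real.sqrt_div (Nat.cast_nonneg n)] at hb
  have hlog : Real.log 2 ≤ Real.log n := Real.log_le_log (by norm_num) (by exact_mod_cast hn)
  rw [Real.rpow_one]
  calc (t n : ℝ) ≤ 2 * (Real.sqrt n / Real.sqrt ε) := hb
    _ = 2 / Real.sqrt ε / Real.log 2 * Real.sqrt n * Real.log 2 := by field_simp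
    _ ≤ 2 / Real.sqrt ε / Real.log 2 * Real.sqrt n * Real.log n := by gcongr
end

section
/- Fix n ≥ 1, ℓ' ≥ 1, and a nonempty finite message space M. Consider the following two random elements of Fin n → (Fin n → M): (i) sample Mat uniformly from Fin ℓ' → Fin n → M and a_1, …, a_n independently and uniformly from Fin n → Fin ℓ', and output the tuple whose i-th entry is the vector (fun j => Mat (a_i j) j); (ii) output a uniformly random element of Fin n → (Fin n → M). Then for every set S of elements of Fin n → (Fin n → M), the absolute difference between the probabilities that (i) lies in S and that (ii) lies in S is at most n³/ℓ'. (The n message vectors read off a random matrix at independent random row indices are statistically close to n independent uniform message vectors.) -/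
open Classical in
lemma pr_eq_sum {α : Type*} [Fintype α] (P : α → Prop) :
    Pr P = (∑ a, if P a then (1 : ℝ) else 0) / Fintype.card α := by
  unfold Pr
  rw [Finset.sum_boole]

lemma pr_nonneg {α : Type*} [Fintype α] (P : α → Prop) : 0 ≤ Pr P := by
  unfold Pr; positivity

lemma pr_le_one {α : Type*} [Fintype α] (P : α → Prop) : Pr P ≤ 1 := by
  classical
  unfold Pr
  apply div_le_one_of_le₀ _ (by positivity)
  exact_mod_cast Finset.card_le_univ _

lemma pr_equiv {α β : Type*} [Fintype α] [Fintype β] (e : α ≃ β) (P : β → Prop) :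
    Pr (fun a => P (e a)) = Pr P := by
  classical
  rw [pr_eq_sum, pr_eq_sum, Fintype.card_congr e]
  congr 1
  exact Equiv.sum_comp e (fun b => if P b then (1 : ℝ) else 0)

lemma pr_prod {α β : Type*} [Fintype α] [Fintype β] (P : α × β → Prop) :
    Pr P = (∑ b, Pr (fun a => P (a, b))) / Fintype.card β := by
  classical
  simp only [pr_eq_sum]
  rw [← Finset.sum_div, Fintype.sum_prod_type_right, Fintype.card_prod, div_div]
  push_cast
  rfl

lemma pr_fst {α β : Type*} [Fintype α] [Fintype β] [Nonempty β] (P : α → Prop) :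
    Pr (fun p : α × β => P p.1) = Pr P := by
  have h : (Fintype.card β : ℝ) ≠ 0 := by exact_mod_cast Fintype.card_ne_zero
  rw [pr_prod]
  simp [h]

lemma pr_exists_le {α τ : Type*} [Fintype α] [Fintype τ] (P : τ → α → Prop) :
    Pr (fun a => ∃ t, P t a) ≤ ∑ t, Pr (P t) := by
  classical
  simp only [pr_eq_sum]
  rw [← Finset.sum_div, Finset.sum_comm]
  gcongr with a
  split_ifs with h
  · obtain ⟨t, ht⟩ := h
    calc (1 : ℝ) = if P t a then 1 else 0 := by simp [ht]
      _ ≤ _ := Finset.single_le_sum (f := fun t => if P t a then (1 : ℝ) else 0)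
          (fun i _ => by positivity) (Finset.mem_univ t)
  · positivity

/-- A uniform function `κ → M` restricted along an injection `ι → κ` is uniform: `κ → M` splits as
a product of the functions on the range of the injection and those on its complement. -/
lemma pr_comp_injective {ι κ M : Type*} [Fintype ι] [Fintype κ] [DecidableEq ι] [DecidableEq κ]
    [Fintype M] [Nonempty M] (e : ι → κ) (he : Function.Injective e) (P : (ι → M) → Prop) :
    Pr (fun g : κ → M => P (fun i => g (e i))) = Pr P := by
  classical
  have h1 := pr_equiv (Equiv.piEquivPiSubtypeProd (fun x => x ∈ Set.range e) (fun _ => M))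
    (fun p => P (fun i => p.1 ⟨e i, i, rfl⟩))
  have h2 := pr_equiv (Equiv.arrowCongr (Equiv.ofInjective e he).symm (Equiv.refl M)) P
  rw [pr_fst (fun q : {x // x ∈ Set.range e} → M => P (fun i => q ⟨e i, i, rfl⟩))] at h1
  exact h1.trans h2

lemma pr_uncurry {ι κ M : Type*} [Fintype ι] [Fintype κ] [DecidableEq ι] [DecidableEq κ]
    [Fintype M] (P : (ι → κ → M) → Prop) :
    Pr (fun g : ι × κ → M => P (fun i j => g (i, j))) = Pr P :=
  pr_equiv (Equiv.curry ι κ M) P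

/-- Two distinct coordinates of a uniform function agree with probability `1/ℓ`. -/
lemma pr_collision {κ : Type*} [Fintype κ] [DecidableEq κ] {ℓ : ℕ} (hl : 1 ≤ ℓ) {x y : κ}
    (hxy : x ≠ y) : Pr (fun g : κ → Fin ℓ => g x = g y) = 1 / ℓ := by
  classical
  have : NeZero ℓ := ⟨by omega⟩
  have hl0 : (ℓ : ℝ) ≠ 0 := by exact_mod_cast NeZero.ne ℓ
  have h1 := pr_comp_injective (M := Fin ℓ) (![x, y]) (by
    intro a b; fin_cases a <;> fin_cases b <;> simp [hxy, hxy.symm]) (fun g => g 0 = g 1)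
  have h2 := pr_equiv (finTwoArrowEquiv (Fin ℓ)) (fun p => p.1 = p.2)
  refine h1.trans (h2.trans ?_)
  have h3 : ∀ b : Fin ℓ, Pr (fun a => a = b) = 1 / ℓ := by
    intro b
    rw [pr_eq_sum, Fintype.sum_eq_single b (by intro a h; simp [h])]
    simp
  rw [pr_prod]
  simp [h3, hl0]

/-- The `n` message vectors read off a uniformly random `ℓ' × n` matrix at
`n` independent uniformly random row-index vectors are within statistical distance `n³/ℓ'`
of `n` independent uniform message vectors. -/
theorem stmt14 {n ℓ' : ℕ} (hn : 1 ≤ n) (hl : 1 ≤ ℓ') {M : Type*} [Fintype M] [Nonempty M]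
    (S : Set (Fin n → Fin n → M)) :
    |Pr (fun p : (Fin ℓ' → Fin n → M) × (Fin n → Fin n → Fin ℓ') =>
          (fun i j => p.1 (p.2 i j) j) ∈ S)
      - Pr (fun u : Fin n → Fin n → M => u ∈ S)| ≤ (n : ℝ) ^ 3 / ℓ' := by
  classical
  have : NeZero ℓ' := ⟨by omega⟩
  let coll : Fin n × Fin n × Fin n → (Fin n → Fin n → Fin ℓ') → Prop :=
    fun t a => t.2.1 ≠ t.2.2 ∧ a t.2.1 t.1 = a t.2.2 t.1
  have hcoll : ∀ t, Pr (coll t) ≤ 1 / ℓ' := by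
    rintro ⟨j, i, i'⟩
    by_cases h : i = i'
    · simp [coll, h, pr_eq_sum]
    · rw [← pr_uncurry]
      simp only [coll, ne_eq, h, not_false_eq_true, true_and]
      exact (pr_collision hl (by simp [h])).le
  have hbad : Pr (fun a => ∃ t, coll t a) ≤ (n : ℝ) ^ 3 / ℓ' := by
    refine (pr_exists_le coll).trans ((Finset.sum_le_sum fun t _ => hcoll t).trans (le_of_eq ?_))
    simp
    ring
  refine le_trans ?_ hbad
  have hgood : ∀ a : Fin n → Fin n → Fin ℓ', (¬ ∃ t, coll t a) →
      Pr (fun m : Fin ℓ' → Fin n → M => (fun i j => m (a i j) j) ∈ S) = Pr (fun u => u ∈ S) := by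
    intro a ha
    rw [← pr_uncurry, ← pr_uncurry (fun u => u ∈ S)]
    refine pr_comp_injective (M := M) (fun x : Fin n × Fin n => (a x.1 x.2, x.2)) ?_
      (fun g => (fun i j => g (i, j)) ∈ S)
    rintro ⟨i, j⟩ ⟨i', j'⟩ h
    simp only [Prod.mk.injEq] at h
    obtain ⟨h, rfl⟩ := h
    by_contra hne
    exact ha ⟨(j, i, i'), fun hi => hne (by simp_all), h⟩
  have hA : (Fintype.card (Fin n → Fin n → Fin ℓ') : ℝ) ≠ 0 := by
    exact_mod_cast Fintype.card_ne_zero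
  -- Averaging over `a`, each summand of the difference vanishes unless `a` has a collision.
  have hconst : Pr (fun u : Fin n → Fin n → M => u ∈ S) =
      (∑ _a : Fin n → Fin n → Fin ℓ', Pr (fun u : Fin n → Fin n → M => u ∈ S)) /
        Fintype.card (Fin n → Fin n → Fin ℓ') := by
    rw [Finset.sum_const, Finset.card_univ, nsmul_eq_mul, mul_div_cancel_left₀ _ hA]
  rw [pr_prod, hconst, ← sub_div, ← Finset.sum_sub_distrib, abs_div, Nat.abs_cast,
    pr_eq_sum (fun a => ∃ t, coll t a)]
  gcongr
  refine (Finset.abs_sum_le_sum_abs _ _).trans (Finset.sum_le_sum fun a _ => ?_)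
  split_ifs with h
  · rw [abs_le]
    constructor <;>
    linarith [pr_nonneg (fun m : Fin ℓ' → Fin n → M => (fun i j => m (a i j) j) ∈ S),
      pr_le_one (fun m : Fin ℓ' → Fin n → M => (fun i j => m (a i j) j) ∈ S),
      pr_nonneg (fun u : Fin n → Fin n → M => u ∈ S),
      pr_le_one (fun u : Fin n → Fin n → M => u ∈ S)]
  · simp only [hgood a h, sub_self, abs_zero, le_refl]
end

section
/- There exist a constant ε > 0 and N : ℕ such that for every odd n ≥ N, the majority protocol Maj_n : (Fin n → Bool) → Bool, defined by Maj_n r = true if and only if the number of coordinates i with r i = true is greater than n/2, is ε-secure against ⌊Real.sqrt n⌋ strong adaptive corruptions. -/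
/-- The majority protocol: the outcome is `true` iff the number of players sending `true`
exceeds `n/2`. -/
def Maj (n : ℕ) (r : Fin n → Bool) : Bool :=
  decide (n < 2 * (Finset.univ.filter fun i => r i = true).card)

lemma choose_step (m t i : ℕ) (hm : 0 < m) (h4 : 4 * t ≤ m) (hi : m + 1 ≤ i + 2 * t)
    (him : i ≤ 2 * m) :
    (Nat.choose (2 * m + 1) (i + 1) : ℝ) ≤
      Real.exp (8 * t / m) * Nat.choose (2 * m + 1) i := by
  have h := Nat.choose_succ_right_eq (2 * m + 1) i
  have hR : (Nat.choose (2 * m + 1) (i + 1) : ℝ) * (i + 1) =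
      Nat.choose (2 * m + 1) i * (2 * m + 1 - i) := by
    have := congrArg (Nat.cast : ℕ → ℝ) h
    rw [Nat.cast_mul, Nat.cast_mul, Nat.cast_sub (by omega)] at this
    push_cast at this
    exact this
  have hm' : (0 : ℝ) < m := by exact_mod_cast hm
  have h4' : (4 : ℝ) * t ≤ m := by exact_mod_cast h4
  have hi' : (m : ℝ) + 1 ≤ i + 2 * t := by exact_mod_cast hi
  have ht0 : (0 : ℝ) ≤ t := Nat.cast_nonneg t
  have hc0 : (0 : ℝ) ≤ Nat.choose (2 * m + 1) i := Nat.cast_nonneg _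
  have hexp : 8 * (t : ℝ) / m + 1 ≤ Real.exp (8 * t / m) := Real.add_one_le_exp _
  have hratio : (2 * m + 1 - i : ℝ) ≤ (8 * t / m + 1) * (i + 1) := by
    have hdiv : (0 : ℝ) ≤ 8 * t / m := by positivity
    have h1 : (8 * t / m : ℝ) * (m / 2) ≤ 8 * t / m * (i + 1) :=
      mul_le_mul_of_nonneg_left (by linarith) hdiv
    have h2 : (8 * t / m : ℝ) * (m / 2) = 4 * t := by field_simp; ring
    linarith
  have hi1 : (0 : ℝ) < i + 1 := by positivity
  refine le_of_mul_le_mul_right ?_ hi1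
  rw [hR]
  calc (Nat.choose (2 * m + 1) i : ℝ) * (2 * m + 1 - i)
      ≤ Nat.choose (2 * m + 1) i * (Real.exp (8 * t / m) * (i + 1)) :=
        mul_le_mul_of_nonneg_left
          (hratio.trans (mul_le_mul_of_nonneg_right hexp hi1.le)) hc0
    _ = _ := by ring

lemma choose_shift (m t i s : ℕ) (hm : 0 < m) (h4 : 4 * t ≤ m) (hi : m + 1 ≤ i + 2 * t)
    (him : i + s ≤ 2 * m + 1) :
    (Nat.choose (2 * m + 1) (i + s) : ℝ) ≤
      Real.exp (8 * t / m) ^ s * Nat.choose (2 * m + 1) i := by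
  induction s with
  | zero => simp
  | succ s ih =>
    have h1 := choose_step m t (i + s) hm h4 (by omega) (by omega)
    have h2 := ih (by omega)
    rw [← add_assoc, pow_succ']
    calc _ ≤ _ := h1
      _ ≤ Real.exp (8 * t / m) * (Real.exp (8 * t / m) ^ s * Nat.choose (2 * m + 1) i) :=
        mul_le_mul_of_nonneg_left h2 (Real.exp_pos _).le
      _ = _ := by ring

lemma tail_bound (m t : ℕ) (hm : 0 < m) (h4 : 4 * t ≤ m) (ht : t ^ 2 ≤ 3 * m) :
    (4 : ℝ) ^ m ≤ (1 + Real.exp 24) *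
      ∑ i ∈ Finset.range (m + 1 - t), (Nat.choose (2 * m + 1) i : ℝ) := by
  have htot : ∑ i ∈ Finset.range (m + 1), (Nat.choose (2 * m + 1) i : ℝ) = 4 ^ m := by
    exact_mod_cast Nat.sum_range_choose_halfway m
  have hC : Real.exp (8 * t / m) ^ t ≤ Real.exp 24 := by
    rw [← Real.exp_nat_mul, Real.exp_le_exp]
    have hm' : (0 : ℝ) < m := by exact_mod_cast hm
    have ht' : (t : ℝ) ^ 2 ≤ 3 * m := by exact_mod_cast ht
    rw [← mul_div_assoc, div_le_iff₀ hm']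
    nlinarith
  have hsplit := Finset.sum_range_add (fun i => (Nat.choose (2 * m + 1) i : ℝ)) (m + 1 - t) t
  rw [show m + 1 - t + t = m + 1 by omega, htot] at hsplit
  have hprev := Finset.sum_range_add (fun i => (Nat.choose (2 * m + 1) i : ℝ)) (m + 1 - 2 * t) t
  rw [show m + 1 - 2 * t + t = m + 1 - t by omega] at hprev
  have hnn : 0 ≤ ∑ i ∈ Finset.range (m + 1 - 2 * t), (Nat.choose (2 * m + 1) i : ℝ) :=
    Finset.sum_nonneg fun _ _ => Nat.cast_nonneg _
  have hcmp : ∑ j ∈ Finset.range t, (Nat.choose (2 * m + 1) (m + 1 - t + j) : ℝ) ≤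
      Real.exp 24 *
        ∑ j ∈ Finset.range t, (Nat.choose (2 * m + 1) (m + 1 - 2 * t + j) : ℝ) := by
    rw [Finset.mul_sum]
    refine Finset.sum_le_sum fun j hj => ?_
    have hj' := Finset.mem_range.1 hj
    have h := choose_shift m t (m + 1 - 2 * t + j) t hm h4 (by omega) (by omega)
    rw [show m + 1 - 2 * t + j + t = m + 1 - t + j by omega] at h
    exact h.trans (mul_le_mul_of_nonneg_right hC (Nat.cast_nonneg _))
  have hE := Real.exp_pos 24
  have hEnn := mul_nonneg hE.le hnn
  rw [hsplit, add_mul, one_mul]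
  rw [hprev] at *
  rw [mul_add]
  linarith

/-- A vector differing from the constant `b` only on a set `s` of size at most `m - t` has majority
`b` even after `t` corruptions. -/
lemma maj_of_close (m t : ℕ) (b : Bool) (s : Finset (Fin (2 * m + 1))) (htm : t ≤ m)
    (hs : s.card < m + 1 - t) (r' : Fin (2 * m + 1) → Bool)
    (hd : hammingDist (fun i => if i ∈ s then !b else b) r' ≤ t) :
    Maj (2 * m + 1) r' = b := by
  have hsub : (Finset.univ.filter fun i => r' i = !b) ⊆
      s ∪ Finset.univ.filter fun i => (if i ∈ s then !b else b) ≠ r' i := by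
    intro i hi
    by_cases his : i ∈ s
    · simp [his]
    · simp only [Finset.mem_filter, Finset.mem_univ, true_and] at hi
      simp [his, hi]
  have h1 := (Finset.card_le_card hsub).trans (Finset.card_union_le _ _)
  have hd' : (Finset.univ.filter fun i => (if i ∈ s then !b else b) ≠ r' i).card ≤ t := hd
  have hsum := Finset.card_filter_add_card_filter_not
    (s := (Finset.univ : Finset (Fin (2 * m + 1)))) (fun i => r' i = true)
  simp only [Bool.not_eq_true, Finset.card_univ, Fintype.card_fin] at hsum
  cases b
  · simp only [Bool.not_false] at h1 hd'
    simp only [Maj, decide_eq_false_iff_not]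
    omega
  · simp only [Bool.not_true] at h1 hd'
    simp only [Maj, decide_eq_true_eq]
    omega

lemma sum_choose_le_card (m t : ℕ) (b : Bool) (htm : t ≤ m)
    (A : (Fin (2 * m + 1) → Bool) → (Fin (2 * m + 1) → Bool))
    (hA : ∀ r, hammingDist r (A r) ≤ t) (S : Finset (Fin (2 * m + 1) → Bool))
    (hS : ∀ r, Maj (2 * m + 1) (A r) = b → r ∈ S) :
    ∑ i ∈ Finset.range (m + 1 - t), Nat.choose (2 * m + 1) i ≤ S.card := by
  have hcard : ((Finset.range (m + 1 - t)).biUnion fun i =>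
      Finset.powersetCard i (Finset.univ : Finset (Fin (2 * m + 1)))).card =
      ∑ i ∈ Finset.range (m + 1 - t), Nat.choose (2 * m + 1) i := by
    rw [Finset.card_biUnion]
    · simp
    · intro i _ j _ hij
      exact Finset.pairwise_disjoint_powersetCard _ hij
  rw [← hcard]
  -- A set `s` of positions is encoded as the message vector differing from `b` exactly on `s`.
  refine Finset.card_le_card_of_injOn (fun s i => if i ∈ s then !b else b) ?_ ?_
  · intro s hs
    simp only [Finset.coe_biUnion, Set.mem_iUnion, Finset.mem_coe, Finset.mem_range,
      Finset.mem_powersetCard, exists_prop] at hs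
    obtain ⟨i, hi, -, hsi⟩ := hs
    exact hS _ (maj_of_close m t b s htm (by omega) _ (hA _))
  · intro s _ s' _ h
    ext i
    have := congrFun h i
    by_cases h1 : i ∈ s <;> by_cases h2 : i ∈ s' <;> simp_all

/-- The majority protocol is `ε`-secure against `⌊√n⌋` strong adaptive
corruptions for some universal constant `ε > 0` and all sufficiently large odd `n`. -/
theorem stmt15 : ∃ ε : ℝ, 0 < ε ∧ ∃ N : ℕ, ∀ n : ℕ, N ≤ n → Odd n →
    StrongSecure (Maj n) ⌊Real.sqrt n⌋₊ ε := by
  have hE := Real.exp_pos 24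
  refine ⟨1 / (2 * (1 + Real.exp 24)), by positivity, 101, ?_⟩
  rintro n hn ⟨m, rfl⟩ A hA b
  rw [Real.nat_floor_real_sqrt_eq_nat_sqrt] at hA
  set t := Nat.sqrt (2 * m + 1) with ht
  have htsq : t * t ≤ 2 * m + 1 := Nat.sqrt_le _
  have h4 : 4 * t ≤ m := by
    by_contra! h
    nlinarith
  have htail := tail_bound m t (by omega) h4 (by nlinarith)
  unfold Pr
  have hcount := sum_choose_le_card m t b (by omega) A hA
    (@Finset.filter _ (fun r => Maj (2 * m + 1) (A r) = b) (Classical.decPred _) Finset.univ)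
    (fun r hr => by simpa using hr)
  have hcount' := (Nat.cast_le (α := ℝ)).2 hcount
  rw [Nat.cast_sum] at hcount'
  have hfin := htail.trans (mul_le_mul_of_nonneg_left hcount' (by positivity))
  have hcardR : ((Fintype.card (Fin (2 * m + 1) → Bool) : ℕ) : ℝ) = 2 * 4 ^ m := by
    simp only [Fintype.card_pi, Fintype.card_bool, Finset.prod_const, Finset.card_univ,
      Fintype.card_fin]
    push_cast
    rw [pow_succ, pow_mul]
    norm_num
    ring
  rw [hcardR, div_le_div_iff₀ (by positivity) (by positivity)]
  linarith
end
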